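/- arXiv:1901.01066 — 2 statements merged into one kernel-verified Lean document; each statement's English description precedes it below -/
import Mathlib

section
/- Let r ∈ {1,3}. For every real number x ≥ 887, the interval (x, 1.048x] contains a prime congruent to r modulo 4. -/
/-- The number of `e` in `[1, n]` congruent to `c` modulo `4` (for `c = 1, 3`). -/
def cnt (c n : ℕ) : ℕ := (n + 4 - c) / 4

/-- The sum of `log j` over `j ≤ n` with `j` congruent to `c` modulo `4`. -/
noncomputable def Tsum (c n : ℕ) : ℝ :=
  ∑ j ∈ Finset.Ioc 0 n, if j % 4 = c then Real.log j else 0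

/-- Chebyshev's function in the residue class of `r` modulo `4`. -/
noncomputable def PsiR (r n : ℕ) : ℝ :=
  ∑ d ∈ Finset.Ioc 0 n, if d % 4 = r then ArithmeticFunction.vonMangoldt d else 0

/-- The model for `Tsum`. -/
noncomputable def hfun (y : ℝ) : ℝ := y / 4 * (Real.log y - 1)

theorem Tsum_succ (c n : ℕ) :
    Tsum c (n + 1) = Tsum c n + if (n + 1) % 4 = c then Real.log ((n : ℝ) + 1) else 0 := by
  unfold Tsum
  rw [Finset.sum_Ioc_succ_top (Nat.zero_le n)]
  simp

theorem count_dvd (c d n : ℕ) (hc : c = 1 ∨ c = 3) (hd : d % 2 = 1) :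
    (∑ j ∈ Finset.Ioc 0 n, if d ∣ j ∧ j % 4 = c then 1 else 0) = cnt (c * d % 4) (n / d) := by
  induction n with
  | zero =>
    have h1 : c * d % 4 = 1 ∨ c * d % 4 = 3 := by
      rcases hc with h | h <;> subst h <;> omega
    rcases h1 with h1 | h1 <;> simp [cnt, h1]
  | succ n ih =>
    rw [Finset.sum_Ioc_succ_top (Nat.zero_le n), ih, Nat.succ_div]
    by_cases h : d ∣ n + 1
    · obtain ⟨q, hq⟩ := h
      have hd0 : 0 < d := by omega
      have hq0 : 0 < q := by
        rcases Nat.eq_zero_or_pos q with h | h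
        · subst h; omega
        · exact h
      have hnd : n / d = q - 1 := by
        have : (n + 1) / d = n / d + if d ∣ n + 1 then 1 else 0 := Nat.succ_div
        rw [hq, if_pos (Dvd.intro q rfl), Nat.mul_div_cancel_left _ hd0] at this
        omega
      rw [hnd, if_pos (show d ∣ n + 1 from ⟨q, hq⟩)]
      have hm : (n + 1) % 4 = (d % 4) * (q % 4) % 4 := by rw [hq, Nat.mul_mod]
      have hm2 : c * d % 4 = (c % 4) * (d % 4) % 4 := by rw [Nat.mul_mod]
      have e1 : d % 4 = 1 ∨ d % 4 = 3 := by omega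
      have e2 : q % 4 = 0 ∨ q % 4 = 1 ∨ q % 4 = 2 ∨ q % 4 = 3 := by omega
      have hdd : d ∣ n + 1 := ⟨q, hq⟩
      simp only [hdd, true_and]
      unfold cnt
      rw [hm, hm2]
      rcases hc with rfl | rfl <;> rcases e1 with e1 | e1 <;> rcases e2 with e2 | e2 | e2 | e2 <;>
        simp [e1, e2] <;> omega
    · simp [h]

theorem Tsum_eq (c n : ℕ) (hc : c = 1 ∨ c = 3) (N : ℕ) (hN : n ≤ N) :
    Tsum c n = ∑ d ∈ Finset.Ioc 0 N, if d % 2 = 1 then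
      ArithmeticFunction.vonMangoldt d * (cnt (c * d % 4) (n / d) : ℝ) else 0 := by
  have h1 : Tsum c n = ∑ j ∈ Finset.Ioc 0 n, ∑ d ∈ Finset.Ioc 0 N,
      if d ∣ j ∧ j % 4 = c then ArithmeticFunction.vonMangoldt d else 0 := by
    unfold Tsum
    refine Finset.sum_congr rfl fun j hj => ?_
    rw [Finset.mem_Ioc] at hj
    split_ifs with h
    · rw [← ArithmeticFunction.vonMangoldt_sum, ← Finset.sum_filter]
      refine Finset.sum_congr ?_ fun _ _ => rfl
      ext d
      simp only [Nat.mem_divisors, Finset.mem_filter, Finset.mem_Ioc]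
      constructor
      · rintro ⟨a, b⟩
        exact ⟨⟨Nat.pos_of_dvd_of_pos a hj.1, (Nat.le_of_dvd hj.1 a).trans (hj.2.trans hN)⟩, a, h⟩
      · rintro ⟨_, a, _⟩
        exact ⟨a, by omega⟩
    · simp [h]
  rw [h1, Finset.sum_comm]
  refine Finset.sum_congr rfl fun d hd => ?_
  split_ifs with h
  · rw [← count_dvd c d n hc h]
    push_cast
    rw [Finset.mul_sum]
    refine Finset.sum_congr rfl fun j _ => ?_
    split_ifs <;> simp
  · apply Finset.sum_eq_zero
    intro j _
    rw [if_neg]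
    rintro ⟨⟨q, rfl⟩, h3⟩
    have : d % 2 = 0 := by omega
    have : (d * q) % 2 = 0 := by rw [Nat.mul_mod, this]; simp
    omega

theorem hfun_diff {a b : ℝ} (ha : 0 < a) (hab : a ≤ b) :
    (b - a) / 4 * Real.log a ≤ hfun b - hfun a ∧ hfun b - hfun a ≤ (b - a) / 4 * Real.log b := by
  have hb : 0 < b := ha.trans_le hab
  have h1 := Real.log_le_sub_one_of_pos (div_pos hb ha)
  have h2 := Real.log_le_sub_one_of_pos (div_pos ha hb)
  rw [Real.log_div hb.ne' ha.ne'] at h1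
  rw [Real.log_div ha.ne' hb.ne'] at h2
  have h3 : a * (Real.log b - Real.log a) ≤ b - a := by
    calc _ ≤ a * (b / a - 1) := by gcongr
      _ = b - a := by field_simp
  have h4 : b * (Real.log a - Real.log b) ≤ a - b := by
    calc _ ≤ b * (a / b - 1) := by gcongr
      _ = a - b := by field_simp
  unfold hfun
  constructor <;> nlinarith

theorem Tsum_four (c n : ℕ) (hc : c = 1 ∨ c = 3) :
    Tsum c n + Real.log n ≤ Tsum c (n + 4) ∧ Tsum c (n + 4) ≤ Tsum c n + Real.log (n + 4 : ℕ) := by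
  have key : ∃ j : ℕ, 1 ≤ j ∧ j ≤ 4 ∧ Tsum c (n + 4) = Tsum c n + Real.log ((n + j : ℕ) : ℝ) := by
    have e : n % 4 = 0 ∨ n % 4 = 1 ∨ n % 4 = 2 ∨ n % 4 = 3 := by omega
    rw [show n + 4 = n + 1 + 1 + 1 + 1 by ring]
    simp only [Tsum_succ]
    rcases hc with rfl | rfl
    · rcases e with e | e | e | e
      · refine ⟨1, by norm_num, by norm_num, ?_⟩
        rw [if_pos (by omega), if_neg (by omega), if_neg (by omega), if_neg (by omega)]; push_cast; ring
      · refine ⟨4, by norm_num, by norm_num, ?_⟩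
        rw [if_neg (by omega), if_neg (by omega), if_neg (by omega), if_pos (by omega)]; push_cast; ring_nf
      · refine ⟨3, by norm_num, by norm_num, ?_⟩
        rw [if_neg (by omega), if_neg (by omega), if_pos (by omega), if_neg (by omega)]; push_cast; ring_nf
      · refine ⟨2, by norm_num, by norm_num, ?_⟩
        rw [if_neg (by omega), if_pos (by omega), if_neg (by omega), if_neg (by omega)]; push_cast; ring_nf
    · rcases e with e | e | e | e
      · refine ⟨3, by norm_num, by norm_num, ?_⟩
        rw [if_neg (by omega), if_neg (by omega), if_pos (by omega), if_neg (by omega)]; push_cast; ring_nf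
      · refine ⟨2, by norm_num, by norm_num, ?_⟩
        rw [if_neg (by omega), if_pos (by omega), if_neg (by omega), if_neg (by omega)]; push_cast; ring_nf
      · refine ⟨1, by norm_num, by norm_num, ?_⟩
        rw [if_pos (by omega), if_neg (by omega), if_neg (by omega), if_neg (by omega)]; push_cast; ring
      · refine ⟨4, by norm_num, by norm_num, ?_⟩
        rw [if_neg (by omega), if_neg (by omega), if_neg (by omega), if_pos (by omega)]; push_cast; ring_nf
  obtain ⟨j, hj1, hj4, hj⟩ := key
  rw [hj]
  constructor
  · have : Real.log n ≤ Real.log ((n + j : ℕ) : ℝ) := by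
      rcases Nat.eq_zero_or_pos n with h | h
      · subst h
        simp only [Nat.cast_zero, Real.log_zero]
        exact Real.log_natCast_nonneg _
      · apply Real.log_le_log (by exact_mod_cast h)
        push_cast; linarith [(Nat.cast_nonneg j : (0 : ℝ) ≤ j)]
    linarith
  · have : Real.log ((n + j : ℕ) : ℝ) ≤ Real.log ((n + 4 : ℕ) : ℝ) := by
      apply Real.log_le_log
      · exact_mod_cast (by omega : 0 < n + j)
      · exact_mod_cast (by omega : n + j ≤ n + 4)
    linarith

theorem Tsum_small (c n : ℕ) (hn : 1 ≤ n) (hn4 : n ≤ 4) (hc : c = 1 ∨ c = 3) :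
    0 ≤ Tsum c n ∧ Tsum c n ≤ Real.log n := by
  have h34 : Real.log 3 ≤ Real.log 4 := Real.log_le_log (by norm_num) (by norm_num)
  have h3 : 0 ≤ Real.log 3 := Real.log_nonneg (by norm_num)
  have h4 : 0 ≤ Real.log 4 := Real.log_nonneg (by norm_num)
  have h2 : 0 ≤ Real.log 2 := Real.log_nonneg (by norm_num)
  have T0 : Tsum c 0 = 0 := by simp [Tsum]
  have T1 := Tsum_succ c 0
  have T2 := Tsum_succ c 1
  have T3 := Tsum_succ c 2
  have T4 := Tsum_succ c 3
  rcases hc with rfl | rfl <;> norm_num [T0] at T1 T2 T3 T4 <;> interval_cases n <;>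
    simp_all

theorem Tsum_bound (c n : ℕ) (hn : 1 ≤ n) (hc : c = 1 ∨ c = 3) :
    |Tsum c n - hfun n| ≤ Real.log n + 1 / 4 := by
  induction n using Nat.strong_induction_on with
  | _ n ih =>
    by_cases h4 : n ≤ 4
    · obtain ⟨h1, h2⟩ := Tsum_small c n hn h4 hc
      have hn1 : (1 : ℝ) ≤ n := by exact_mod_cast hn
      have hn4 : (n : ℝ) ≤ 4 := by exact_mod_cast h4
      have hl : 0 ≤ Real.log n := Real.log_nonneg hn1
      have hl2 := Real.one_sub_inv_le_log_of_pos (by linarith : (0 : ℝ) < n)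
      have hl3 : (n : ℝ) - 1 ≤ n * Real.log n := by
        calc (n : ℝ) - 1 = n * (1 - (n : ℝ)⁻¹) := by field_simp
          _ ≤ _ := by gcongr
      unfold hfun
      rw [abs_le]
      constructor <;> nlinarith
    · obtain ⟨m, rfl⟩ : ∃ m, n = m + 4 := ⟨n - 4, by omega⟩
      have hm : 1 ≤ m := by omega
      have hm1 : (1 : ℝ) ≤ m := by exact_mod_cast hm
      have := ih m (by omega) hm
      obtain ⟨a1, a2⟩ := Tsum_four c m hc
      obtain ⟨b1, b2⟩ := hfun_diff (a := m) (b := (m + 4 : ℕ)) (by linarith) (by push_cast; linarith)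
      have e : (((m + 4 : ℕ) : ℝ) - m) / 4 = 1 := by push_cast; ring
      rw [e] at b1 b2
      rw [abs_le] at this ⊢
      constructor <;> linarith

theorem Tsum_bound_div (c N k : ℕ) (hk : 1 ≤ k) (hkN : k ≤ N) (hc : c = 1 ∨ c = 3) :
    |Tsum c (N / k) - hfun ((N : ℝ) / k)| ≤ 2 * Real.log N + 1 := by
  have hn : 1 ≤ N / k := by rw [Nat.one_le_div_iff (by omega)]; exact hkN
  have h1 := Tsum_bound c (N / k) hn hc
  have hn1 : (1 : ℝ) ≤ (N / k : ℕ) := by exact_mod_cast hn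
  have hk1 : (1 : ℝ) ≤ k := by exact_mod_cast hk
  have h2 : ((N / k : ℕ) : ℝ) ≤ (N : ℝ) / k := Nat.cast_div_le
  have h3 : (N : ℝ) / k ≤ (N / k : ℕ) + 1 := by
    rw [div_le_iff₀ (by linarith)]
    have := Nat.lt_div_mul_add (a := N) (b := k) (by omega)
    have h4 : N ≤ (N / k + 1) * k := by rw [add_mul, one_mul]; exact this.le
    exact_mod_cast h4
  have h5 : (N : ℝ) / k ≤ N := div_le_self (by positivity) hk1
  obtain ⟨b1, b2⟩ := hfun_diff (a := (N / k : ℕ)) (b := (N : ℝ) / k) (by linarith) h2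
  have l0 : 0 ≤ Real.log ((N / k : ℕ) : ℝ) := Real.log_nonneg hn1
  have l1 : Real.log ((N / k : ℕ) : ℝ) ≤ Real.log ((N : ℝ) / k) := Real.log_le_log (by linarith) h2
  have l2 : Real.log ((N : ℝ) / k) ≤ Real.log N := Real.log_le_log (by linarith) h5
  rw [abs_le] at h1 ⊢
  constructor <;> nlinarith

theorem cnt_zero (c : ℕ) (hc : c = 1 ∨ c = 3) : cnt c 0 = 0 := by
  rcases hc with rfl | rfl <;> rfl

theorem mul_class (c k : ℕ) (hc : c = 1 ∨ c = 3) (hk : k % 2 = 1) :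
    c * k % 4 = 1 ∨ c * k % 4 = 3 := by
  rcases hc with h | h <;> subst h <;> omega

/-- The arithmetic function attached to the weights. -/
noncomputable def Fw (S : Finset ℕ) (w : ℕ → ℝ) (c m : ℕ) : ℝ :=
  ∑ k ∈ S, w k * (cnt (c * k % 4) (m / k) : ℝ)

theorem weighted_identity (S : Finset ℕ) (w : ℕ → ℝ) (hS : ∀ k ∈ S, k % 2 = 1) (r N : ℕ)
    (hr : r = 1 ∨ r = 3) :
    ∑ k ∈ S, w k * Tsum (r * k % 4) (N / k) =
      ∑ d ∈ Finset.Ioc 0 N, if d % 2 = 1 then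
        ArithmeticFunction.vonMangoldt d * Fw S w (r * d % 4) (N / d) else 0 := by
  have h1 : ∀ k ∈ S, w k * Tsum (r * k % 4) (N / k) =
      ∑ d ∈ Finset.Ioc 0 N, if d % 2 = 1 then ArithmeticFunction.vonMangoldt d *
        (w k * (cnt ((r * d % 4) * k % 4) (N / d / k) : ℝ)) else 0 := by
    intro k hk
    rw [Tsum_eq (r * k % 4) (N / k) (mul_class r k hr (hS k hk)) N (Nat.div_le_self _ _),
      Finset.mul_sum]
    refine Finset.sum_congr rfl fun d _ => ?_
    have e1 : (r * k % 4) * d % 4 = (r * d % 4) * k % 4 := by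
      rw [Nat.mod_mul_mod, Nat.mod_mul_mod]; congr 1; ring
    rw [e1, Nat.div_div_eq_div_mul, Nat.div_div_eq_div_mul, mul_comm k d]
    split_ifs
    · ring
    · simp
  rw [Finset.sum_congr rfl h1, Finset.sum_comm]
  refine Finset.sum_congr rfl fun d _ => ?_
  split_ifs
  · rw [Fw, Finset.mul_sum]
  · simp

/-- Chebyshev's function restricted to odd numbers. -/
noncomputable def PsiO (n : ℕ) : ℝ :=
  ∑ d ∈ Finset.Ioc 0 n, if d % 2 = 1 then ArithmeticFunction.vonMangoldt d else 0

theorem PsiO_eq (n : ℕ) : PsiO n = PsiR 1 n + PsiR 3 n := by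
  unfold PsiO PsiR
  rw [← Finset.sum_add_distrib]
  refine Finset.sum_congr rfl fun d _ => ?_
  have : d % 4 = 0 ∨ d % 4 = 1 ∨ d % 4 = 2 ∨ d % 4 = 3 := by omega
  rcases this with h | h | h | h
  · rw [if_neg (by omega)]; simp [h]
  · rw [if_pos (by omega)]; simp [h]
  · rw [if_neg (by omega)]; simp [h]
  · rw [if_pos (by omega)]; simp [h]

theorem PsiO_le (n : ℕ) : PsiO n ≤ Chebyshev.psi n := by
  unfold PsiO Chebyshev.psi
  rw [Nat.floor_natCast]
  refine Finset.sum_le_sum fun d _ => ?_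
  split_ifs
  · exact le_rfl
  · exact ArithmeticFunction.vonMangoldt_nonneg

theorem PsiO_div (N y : ℕ) (hy : 0 < y) :
    PsiO (N / y) = ∑ d ∈ Finset.Ioc 0 N, if d * y ≤ N ∧ d % 2 = 1 then
      ArithmeticFunction.vonMangoldt d else 0 := by
  rw [PsiO, ← Finset.sum_filter, ← Finset.sum_filter]
  refine Finset.sum_congr ?_ fun _ _ => rfl
  ext d
  simp only [Finset.mem_Ioc, Finset.mem_filter, Nat.le_div_iff_mul_le hy]
  constructor
  · rintro ⟨⟨a, b⟩, c⟩
    exact ⟨⟨a, (Nat.le_mul_of_pos_right d hy).trans b⟩, b, c⟩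
  · rintro ⟨⟨a, _⟩, b, c⟩
    exact ⟨⟨a, b⟩, c⟩

theorem abstract_bound (S J : Finset ℕ) (w D : ℕ → ℝ) (hS : ∀ k ∈ S, k % 2 = 1)
    (h0 : ∑ k ∈ S, w k / k = 0) (hJ : ∀ y ∈ J, 0 < y) (hD : ∀ y ∈ J, 0 ≤ D y)
    (hE : ∀ c m : ℕ, (c = 1 ∨ c = 3) → 1 ≤ m →
      |Fw S w c m - (if c = 1 then 1 else 0)| ≤ ∑ y ∈ J, D y * (if y ≤ m then 1 else 0))
    (r N : ℕ) (C : ℝ) (hr : r = 1 ∨ r = 3) (hN : ∀ k ∈ S, k ≤ N)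
    (hpsi : ∀ y ∈ J, PsiO (N / y) ≤ C * ((N : ℝ) / y)) :
    |PsiR r N - (-(1 / 4) * ∑ k ∈ S, w k * (Real.log k / k)) * N| ≤
      C * (∑ y ∈ J, D y / y) * N + (∑ k ∈ S, |w k|) * (2 * Real.log N + 1) := by
  set M := -(1 / 4) * ∑ k ∈ S, w k * (Real.log k / k) with hM
  have hid := weighted_identity S w hS r N hr
  set A := ∑ k ∈ S, w k * Tsum (r * k % 4) (N / k) with hA
  -- first part
  have hmain : ∑ k ∈ S, w k * hfun ((N : ℝ) / k) = M * N := by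
    rcases Nat.eq_zero_or_pos N with rfl | hN0
    · simp [hfun]
    have hN0' : (N : ℝ) ≠ 0 := by exact_mod_cast hN0.ne'
    have : ∀ k ∈ S, w k * hfun ((N : ℝ) / k) =
        (N / 4 * (Real.log N - 1)) * (w k / k) + (-(1 / 4) * N) * (w k * (Real.log k / k)) := by
      intro k hk
      have hk0 : (k : ℝ) ≠ 0 := by
        have := hS k hk
        exact_mod_cast (by omega : k ≠ 0)
      unfold hfun
      rw [Real.log_div hN0' hk0]
      field_simp
      ring
    rw [Finset.sum_congr rfl this, Finset.sum_add_distrib, ← Finset.mul_sum, ← Finset.mul_sum, h0, hM]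
    ring
  have hpart1 : |A - M * N| ≤ (∑ k ∈ S, |w k|) * (2 * Real.log N + 1) := by
    rw [← hmain, hA, ← Finset.sum_sub_distrib, Finset.sum_mul]
    refine (Finset.abs_sum_le_sum_abs _ _).trans (Finset.sum_le_sum fun k hk => ?_)
    rw [← mul_sub, abs_mul]
    have := hS k hk
    exact mul_le_mul_of_nonneg_left (Tsum_bound_div _ N k (by omega) (hN k hk)
      (mul_class r k hr this)) (abs_nonneg _)
  -- second part
  have hpart2 : |A - PsiR r N| ≤ C * (∑ y ∈ J, D y / y) * N := by
    rw [hid, PsiR, ← Finset.sum_sub_distrib]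
    refine (Finset.abs_sum_le_sum_abs _ _).trans ?_
    have hb : ∀ d ∈ Finset.Ioc 0 N,
        |(if d % 2 = 1 then ArithmeticFunction.vonMangoldt d * Fw S w (r * d % 4) (N / d) else 0) -
          (if d % 4 = r then ArithmeticFunction.vonMangoldt d else 0)| ≤
        ∑ y ∈ J, D y * (if d * y ≤ N ∧ d % 2 = 1 then ArithmeticFunction.vonMangoldt d else 0) := by
      intro d hd
      rw [Finset.mem_Ioc] at hd
      have hL : 0 ≤ ArithmeticFunction.vonMangoldt d := ArithmeticFunction.vonMangoldt_nonneg
      by_cases hodd : d % 2 = 1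
      · have hm : 1 ≤ N / d := by rw [Nat.one_le_div_iff hd.1]; exact hd.2
        have h := hE (r * d % 4) (N / d) (mul_class r d hr hodd) hm
        have e : (if d % 4 = r then ArithmeticFunction.vonMangoldt d else 0) =
            ArithmeticFunction.vonMangoldt d * (if r * d % 4 = 1 then 1 else 0) := by
          have : d % 4 = r ↔ r * d % 4 = 1 := by
            rcases hr with rfl | rfl <;> omega
          by_cases h : d % 4 = r
          · simp [h, this.1 h]
          · simp [h, mt this.2 h]
        rw [if_pos hodd, e, ← mul_sub, abs_mul, abs_of_nonneg hL]
        refine (mul_le_mul_of_nonneg_left h hL).trans ?_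
        rw [Finset.mul_sum]
        refine Finset.sum_le_sum fun y hy => ?_
        have : y ≤ N / d ↔ d * y ≤ N ∧ d % 2 = 1 := by
          rw [Nat.le_div_iff_mul_le hd.1, mul_comm]
          exact ⟨fun h => ⟨h, hodd⟩, fun h => h.1⟩
        simp only [this]
        split_ifs <;> simp [mul_comm]
      · have : ¬ d % 4 = r := by rcases hr with rfl | rfl <;> omega
        rw [if_neg hodd, if_neg this]
        simp only [sub_self, abs_zero]
        refine Finset.sum_nonneg fun y hy => mul_nonneg (hD y hy) ?_
        split_ifs
        · exact hL
        · exact le_rfl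
    refine (Finset.sum_le_sum hb).trans ?_
    rw [Finset.sum_comm, mul_assoc, Finset.sum_mul, Finset.mul_sum]
    refine Finset.sum_le_sum fun y hy => ?_
    rw [← Finset.mul_sum, ← PsiO_div N y (hJ y hy)]
    calc D y * PsiO (N / y) ≤ D y * (C * ((N : ℝ) / y)) :=
          mul_le_mul_of_nonneg_left (hpsi y hy) (hD y hy)
      _ = C * (D y / y * N) := by ring
  rw [abs_le] at hpart1 hpart2 ⊢
  constructor <;> linarith [hpart1.1, hpart1.2, hpart2.1, hpart2.2]

/-- The shift attached to `k` in the class `c`. -/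
def shf (c k : ℕ) : ℕ := k - 1 - (k * (c * k % 4) - c) / 4

/-- The packed increments of `i ↦ (i + shf c k) / k` for `i ≤ n` in base `2048`. -/
def packK (n c k : ℕ) : ℕ := 2 ^ (11 * (n + shf c k)) / (2 ^ (11 * k) - 1)

def packSum (n c : ℕ) : List ℕ → ℕ
  | [] => 0
  | k :: t => packK n c k + packSum n c t

/-- The packed increments of a sum of unit steps. -/
def stepSum (n : ℕ) : List ℕ → ℕ
  | [] => 0
  | a :: t => 2 ^ (11 * (n - a)) + stepSum n t

def maskN (n : ℕ) : ℕ := 1024 * ((2 ^ (11 * (n + 1)) - 1) / 2047)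

def packTest (n A : ℕ) : Bool := Nat.beq (Nat.land (2048 * A / 2047) (maskN n)) (maskN n)

/-- The number with base `2048` digits given by `C`. -/
def pack (C : ℕ → ℤ) : ℕ → ℤ
  | 0 => 0
  | n + 1 => pack C n * 2048 + C n

def packN (C : ℕ → ℕ) : ℕ → ℕ
  | 0 => 0
  | n + 1 => packN C n * 2048 + C n

/-- `A` packs the increments of `C` up to `n`. -/
def Inc (n : ℕ) (C : ℕ → ℤ) (A : ℤ) : Prop := 2047 * pack C (n + 1) = 2048 * A - C n

theorem pack_add (C D : ℕ → ℤ) (n : ℕ) : pack (fun i => C i + D i) n = pack C n + pack D n := by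
  induction n with
  | zero => simp [pack]
  | succ n ih => simp only [pack, ih]; ring

theorem pack_neg (C : ℕ → ℤ) (n : ℕ) : pack (fun i => -C i) n = -pack C n := by
  induction n with
  | zero => simp [pack]
  | succ n ih => simp only [pack, ih]; ring

theorem pack_zero (n : ℕ) : pack (fun _ => 0) n = 0 := by
  induction n with
  | zero => simp [pack]
  | succ n ih => simp only [pack, ih]; ring

theorem Inc.add {n : ℕ} {C D : ℕ → ℤ} {A B : ℤ} (h1 : Inc n C A) (h2 : Inc n D B) :
    Inc n (fun i => C i + D i) (A + B) := by
  unfold Inc at *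
  rw [pack_add]; linarith

theorem Inc.neg {n : ℕ} {C : ℕ → ℤ} {A : ℤ} (h1 : Inc n C A) : Inc n (fun i => -C i) (-A) := by
  unfold Inc at *
  rw [pack_neg]; linarith

theorem Inc.zero (n : ℕ) : Inc n (fun _ => 0) 0 := by
  unfold Inc
  rw [pack_zero]; simp

theorem Inc.smul {n : ℕ} {C : ℕ → ℤ} {A : ℤ} (h1 : Inc n C A) (t : ℕ) :
    Inc n (fun i => t * C i) (t * A) := by
  induction t with
  | zero => simpa using Inc.zero n
  | succ t ih =>
    have := ih.add h1
    convert this using 1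
    · funext i; push_cast; ring
    · push_cast; ring

theorem pow_div_rem (k : ℕ) (hk : 1 ≤ k) (n : ℕ) :
    ∃ q : ℕ, 2 ^ (11 * n) = q * (2 ^ (11 * k) - 1) + 2 ^ (11 * (n % k)) ∧
      2 ^ (11 * (n + 1)) / (2 ^ (11 * k) - 1) =
        2048 * q + (if k ∣ n + 1 then 1 else 0) ∧ 2 ^ (11 * n) / (2 ^ (11 * k) - 1) = q := by
  set b := 2 ^ (11 * k) - 1 with hb
  have hB : 2 ^ (11 * k) = b + 1 := by
    have : 0 < 2 ^ (11 * k) := by positivity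
    omega
  have hlt : ∀ j, j < k → 2 ^ (11 * j) < b := by
    intro j hj
    have h1 : 2 ^ (11 * (j + 1)) ≤ 2 ^ (11 * k) := Nat.pow_le_pow_right (by norm_num) (by omega)
    have h2 : 2 ^ (11 * (j + 1)) = 2 ^ (11 * j) * 2048 := by rw [mul_add, pow_add]; norm_num
    have h3 : 0 < 2 ^ (11 * j) := by positivity
    omega
  have hb0 : 0 < b := lt_of_le_of_lt (Nat.zero_le _) (hlt 0 hk)
  have hdiv : ∀ x q j, j < k → x = q * b + 2 ^ (11 * j) → x / b = q := by
    intro x q j hj hx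
    rw [hx, mul_comm, Nat.mul_add_div hb0, Nat.div_eq_of_lt (hlt j hj), add_zero]
  have hstep : ∀ n q, 2 ^ (11 * n) = q * b + 2 ^ (11 * (n % k)) →
      2 ^ (11 * (n + 1)) = (2048 * q + (if k ∣ n + 1 then 1 else 0)) * b +
        2 ^ (11 * ((n + 1) % k)) := by
    intro n q hq
    have h2 : ∀ j, 2 ^ (11 * (j + 1)) = 2 ^ (11 * j) * 2048 := by
      intro j; rw [mul_add, pow_add]; norm_num
    have hm : n % k < k := Nat.mod_lt _ hk
    have hne : (n + 1) % k = (n % k + 1) % k := by rw [Nat.mod_add_mod]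
    by_cases hd : k ∣ n + 1
    · have h0 : (n + 1) % k = 0 := Nat.mod_eq_zero_of_dvd hd
      have h3 : n % k + 1 = k := by
        by_contra hcon
        rw [hne, Nat.mod_eq_of_lt (by omega)] at h0
        omega
      rw [if_pos hd, h0, h2, hq, add_mul, ← h2 (n % k), h3, hB]
      ring
    · have h0 : (n + 1) % k ≠ 0 := fun h => hd (Nat.dvd_of_mod_eq_zero h)
      have h3 : n % k + 1 < k := by
        rcases Nat.lt_or_ge (n % k + 1) k with h | h
        · exact h
        · have : n % k + 1 = k := by omega
          rw [hne, this, Nat.mod_self] at h0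
          exact absurd rfl h0
      rw [if_neg hd, hne, Nat.mod_eq_of_lt h3, h2, hq, h2]
      ring
  have hex : ∃ q, 2 ^ (11 * n) = q * b + 2 ^ (11 * (n % k)) := by
    induction n with
    | zero => exact ⟨0, by simp⟩
    | succ n ih =>
      obtain ⟨q, hq⟩ := ih
      exact ⟨_, hstep n q hq⟩
  obtain ⟨q, hq⟩ := hex
  exact ⟨q, hq, hdiv _ _ _ (Nat.mod_lt _ hk) (hstep n q hq), hdiv _ _ _ (Nat.mod_lt _ hk) hq⟩

theorem Inc_K (k e : ℕ) (he : e < k) (n : ℕ) :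
    Inc n (fun i => (((i + e) / k : ℕ) : ℤ)) ((2 ^ (11 * (n + e)) / (2 ^ (11 * k) - 1) : ℕ) : ℤ) := by
  induction n with
  | zero =>
    obtain ⟨q, h1, h2, h3⟩ := pow_div_rem k (by omega) e
    rw [Nat.mod_eq_of_lt he] at h1
    have hq : q * (2 ^ (11 * k) - 1) = 0 := by omega
    have hb : 2 ^ (11 * k) - 1 ≠ 0 := by
      have : 2 ^ (11 * 1) ≤ 2 ^ (11 * k) := Nat.pow_le_pow_right (by norm_num) (by omega)
      omega
    have hq0 : q = 0 := by
      rcases Nat.mul_eq_zero.1 hq with h | h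
      · exact h
      · exact absurd h hb
    unfold Inc
    simp only [pack, zero_add]
    rw [h3, hq0, Nat.div_eq_of_lt he]
    simp
  | succ n ih =>
    obtain ⟨q, h1, h2, h3⟩ := pow_div_rem k (by omega) (n + e)
    have hs : (n + e + 1) / k = (n + e) / k + if k ∣ n + e + 1 then 1 else 0 := Nat.succ_div
    unfold Inc at ih ⊢
    rw [pack]
    beta_reduce at ih ⊢
    rw [show n + 1 + e = n + e + 1 by ring, h2, hs]
    rw [h3] at ih
    rw [Nat.cast_add, Nat.cast_add, Nat.cast_mul]
    push_cast at ih ⊢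
    linarith

theorem Inc_step (a n : ℕ) (ha : a ≤ n) :
    Inc n (fun i => if a ≤ i then 1 else 0) ((2 ^ (11 * (n - a)) : ℕ) : ℤ) := by
  have hz : ∀ m, m ≤ a → pack (fun i => if a ≤ i then 1 else 0) m = 0 := by
    intro m
    induction m with
    | zero => intro _; rfl
    | succ m ih =>
      intro h
      rw [pack, ih (by omega), if_neg (by omega)]; rfl
  induction n, ha using Nat.le_induction with
  | base => unfold Inc; rw [pack, hz a le_rfl]; simp
  | succ n hn ih =>
    unfold Inc at ih ⊢
    rw [pack, show 11 * (n + 1 - a) = 11 * (n - a) + 11 by omega, pow_add]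
    beta_reduce at ih ⊢
    rw [if_pos hn] at ih
    rw [if_pos (by omega : a ≤ n + 1)]
    push_cast at ih ⊢
    linarith

theorem Inc_list (n c : ℕ) (l : List ℕ) (hl : ∀ k ∈ l, shf c k < k) :
    Inc n (fun i => (l.map fun k => (((i + shf c k) / k : ℕ) : ℤ)).sum) (packSum n c l : ℤ) := by
  induction l with
  | nil => simpa [packSum] using Inc.zero n
  | cons k t ih =>
    have h1 := Inc_K k (shf c k) (hl k (by simp)) n
    have h2 := ih fun j hj => hl j (by simp [hj])
    simpa [packSum, packK] using h1.add h2

theorem Inc_steps (n : ℕ) (l : List ℕ) (hl : ∀ a ∈ l, a ≤ n) :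
    Inc n (fun i => (l.map fun a => if a ≤ i then (1 : ℤ) else 0).sum) (stepSum n l : ℤ) := by
  induction l with
  | nil => simpa [stepSum] using Inc.zero n
  | cons k t ih =>
    have h1 := Inc_step k n (hl k (by simp))
    have h2 := ih fun j hj => hl j (by simp [hj])
    simpa [stepSum] using h1.add h2

theorem packN_land (D : ℕ → ℕ) (n : ℕ) (hD : ∀ i < n, D i < 2048)
    (h : packN D n &&& packN (fun _ => 1024) n = packN (fun _ => 1024) n) :
    ∀ i < n, 1024 ≤ D i := by
  induction n with
  | zero => intro i hi; omega
  | succ n ih =>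
    have hd := hD n (by omega)
    simp only [packN] at h
    have h1 := congrArg (· / 2 ^ 11) h
    have h2 := congrArg (· % 2 ^ 11) h
    simp only [Nat.and_div_two_pow, Nat.and_mod_two_pow] at h1 h2
    rw [show (packN D n * 2048 + D n) / 2 ^ 11 = packN D n by omega,
      show (packN (fun _ => 1024) n * 2048 + 1024) / 2 ^ 11 = packN (fun _ => 1024) n by omega] at h1
    rw [show (packN D n * 2048 + D n) % 2 ^ 11 = D n by omega,
      show (packN (fun _ => 1024) n * 2048 + 1024) % 2 ^ 11 = 1024 by omega] at h2
    intro i hi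
    rcases Nat.lt_succ_iff_lt_or_eq.1 hi with h' | rfl
    · exact ih (fun i hi => hD i (by omega)) h1 i h'
    · calc 1024 = D i &&& 1024 := h2.symm
        _ ≤ D i := Nat.and_le_left

theorem packN_cast (D : ℕ → ℕ) (n : ℕ) : ((packN D n : ℕ) : ℤ) = pack (fun i => (D i : ℤ)) n := by
  induction n with
  | zero => rfl
  | succ n ih => simp only [packN, pack, ← ih]; push_cast; ring

theorem maskN_eq (n : ℕ) : maskN n = packN (fun _ => 1024) (n + 1) := by
  have h : ∀ n, packN (fun _ => 1024) n * 2047 + 1024 = 1024 * 2 ^ (11 * n) := by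
    intro n
    induction n with
    | zero => rfl
    | succ n ih =>
      rw [packN, mul_add 11, pow_add, show (2 : ℕ) ^ (11 * 1) = 2048 by norm_num]
      linarith
  have h1 : ∀ n, ∃ t, 2 ^ (11 * n) = 2047 * t + 1 := by
    intro n
    induction n with
    | zero => exact ⟨0, rfl⟩
    | succ n ih =>
      obtain ⟨t, ht⟩ := ih
      refine ⟨2048 * t + 1, ?_⟩
      rw [mul_add 11, pow_add, ht]; norm_num; ring
  obtain ⟨t, ht⟩ := h1 (n + 1)
  have h2 := h (n + 1)
  unfold maskN
  rw [ht] at h2 ⊢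
  omega

theorem pack_nonneg (D : ℕ → ℕ) (n : ℕ) : 0 ≤ pack (fun i => (D i : ℤ)) n := by
  rw [← packN_cast]; positivity

theorem packTest_correct (n : ℕ) (D : ℕ → ℤ) (X Y : ℕ) (h : Inc n D ((X : ℤ) - Y))
    (hD : ∀ i ≤ n, 0 ≤ D i ∧ D i < 2047) (ht : packTest n (X - Y) = true) :
    ∀ i ≤ n, 1024 ≤ D i := by
  set E : ℕ → ℕ := fun i => (D i).toNat with hE
  have hED : ∀ i ≤ n, (E i : ℤ) = D i := fun i hi => Int.toNat_of_nonneg (hD i hi).1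
  have hpack : ∀ m, m ≤ n + 1 → pack D m = ((packN E m : ℕ) : ℤ) := by
    intro m
    induction m with
    | zero => intro _; rfl
    | succ m ih =>
      intro hm
      rw [pack, packN, ih (by omega), ← hED m (by omega)]
      push_cast; ring
  unfold Inc at h
  rw [hpack (n + 1) le_rfl] at h
  have hDn := hD n le_rfl
  have hXY : ((X - Y : ℕ) : ℤ) = (X : ℤ) - Y := by omega
  rw [← hXY] at h
  have hZ : 2048 * (X - Y) / 2047 = packN E (n + 1) := by omega
  unfold packTest at ht
  rw [hZ, maskN_eq] at ht
  have ht' := Nat.eq_of_beq_eq_true ht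
  have := packN_land E (n + 1) (fun i hi => by have := hD i (by omega); have := hED i (by omega); omega) ht'
  intro i hi
  rw [← hED i hi]
  exact_mod_cast this i (by omega)

def posL : List ℕ := [
  1, 15, 21, 33, 35, 39, 51, 55, 57, 65, 69, 77, 85, 87, 91, 93, 95, 111, 115, 119, 123, 129,
  133, 141, 143, 145, 155, 159, 161, 177, 183, 185, 187, 201, 203, 205, 209, 213, 215, 217, 219,
  221, 235, 237, 247, 249, 253, 259, 265, 267, 287, 291, 295, 299, 301, 303, 305, 309, 319, 321,
  323, 327, 329, 335, 339, 341, 355, 365, 371, 377, 381, 391, 393, 395, 403, 407, 411, 413, 415,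
  417, 427, 437, 445, 447, 451, 453, 469, 471, 473, 481, 485, 489, 493, 497, 501, 505, 511, 515,
  517, 519, 527, 533, 535, 537, 543, 545, 551, 553, 559, 565, 573, 579, 581, 583, 589, 591, 597,
  611, 623, 629, 633, 635, 649, 655, 667, 669, 671, 679, 681, 685, 687, 689, 695, 697, 699, 703,
  707, 713, 717, 721, 723, 731, 737, 745, 749, 753, 755, 763, 767, 771, 779, 781, 785, 789, 791,
  793, 799, 803, 807, 813, 815, 817, 831, 835, 843, 849, 851, 865, 869, 871, 879, 889, 893, 895,
  899, 901, 905, 913, 917, 921, 923, 933, 939, 943, 949, 951, 955, 959, 965, 973, 979, 985, 989,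
  993, 995, 1003, 1007, 1011, 1027, 1037, 1041, 1043, 1047, 1055, 1057, 1059, 1067, 1073, 1077,
  1079, 1081, 1099, 1101, 1111, 1115, 1119, 1121, 1133, 1135, 1137, 1139, 1141, 1145, 1147, 1149,
  1155, 1157, 1159, 1165, 1167, 1169, 1177, 1189, 1191, 1195, 1199, 1203, 1205, 1207, 1211, 1219,
  1227, 1241, 1243, 1247, 1253, 1255, 1257, 1261, 1263, 1267, 1271, 1273, 1285, 1293, 1299, 1313,
  1315, 1317, 1329, 1333, 1337, 1339, 1343, 1345, 1347, 1349, 1351, 1355, 1357, 1363, 1365, 1371,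
  1379, 1383, 1385, 1387, 1389, 1391, 1393, 1397, 1401, 1403, 1405, 1411, 1415, 1417, 1437, 1441,
  1457, 1461, 1465, 1469, 1473, 1477, 1497, 1501, 1507, 1509, 1513, 1517, 1527, 1529, 1535, 1537,
  1541, 1555, 1561, 1563, 1565, 1569, 1577, 1585, 1589, 1591, 1603, 1623, 1631, 1633, 1639, 1641,
  1643, 1649, 1651, 1655, 1661, 1671, 1673, 1679, 1685, 1687, 1689, 1691, 1703, 1707, 1711, 1713,
  1717, 1727, 1731, 1735, 1739, 1745, 1751, 1757, 1761, 1763, 1765, 1769, 1779, 1781, 1785, 1793,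
  1795, 1797, 1799, 1803, 1807, 1817, 1819, 1821, 1829, 1835, 1837, 1839, 1841, 1843, 1851, 1853,
  1857, 1865, 1883, 1891, 1893, 1895, 1897, 1903, 1909, 1915, 1919, 1921, 1923, 1927, 1929, 1937,
  1939, 1941, 1943, 1945, 1957, 1959, 1961, 1963, 1967, 1969, 1977, 1981, 1983, 1985, 1991, 1995,
  2005, 2019, 2021, 2031, 2033, 2041, 2045, 2047, 2049, 2051, 2059, 2071, 2073, 2077, 2095, 2101,
  2103, 2105, 2117, 2119, 2123, 2127, 2145, 2147, 2149, 2155, 2157, 2159, 2165, 2167, 2171, 2173,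
  2177, 2181, 2183, 2189, 2191, 2195, 2199, 2201, 2215, 2217, 2219, 2227, 2229, 2231, 2245, 2249,
  2253, 2257, 2263, 2271, 2279, 2283, 2285, 2291, 2305, 2307, 2315, 2317, 2319, 2321, 2323, 2327,
  2329, 2335, 2353, 2359, 2361, 2363, 2369, 2391, 2395, 2407, 2413, 2415, 2419, 2427, 2429, 2433,
  2435, 2443, 2449, 2453, 2455, 2461, 2463, 2469, 2471, 2479, 2481, 2483, 2487, 2489, 2491, 3861]

def negL : List ℕ := [
  3, 5, 7, 11, 13, 17, 19, 23, 29, 31, 37, 41, 43, 47, 53, 59, 61, 67, 71, 73, 79, 83, 89, 97,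
  101, 103, 105, 107, 109, 113, 127, 131, 137, 139, 149, 151, 157, 163, 165, 167, 173, 179, 181,
  191, 193, 195, 197, 199, 211, 223, 227, 229, 231, 233, 239, 241, 251, 255, 257, 263, 269, 271,
  273, 277, 281, 283, 285, 293, 307, 311, 313, 317, 331, 337, 345, 347, 349, 353, 357, 359, 367,
  373, 379, 383, 385, 389, 397, 399, 401, 409, 419, 421, 429, 431, 433, 435, 439, 443, 449, 455,
  457, 461, 463, 465, 467, 479, 483, 487, 491, 499, 503, 509, 521, 523, 541, 547, 555, 557, 561,
  563, 569, 571, 577, 587, 593, 595, 599, 601, 607, 609, 613, 615, 617, 619, 627, 631, 641, 643,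
  645, 647, 651, 653, 659, 661, 663, 665, 673, 677, 683, 691, 701, 705, 709, 715, 719, 727, 733,
  739, 741, 743, 751, 757, 759, 761, 769, 773, 777, 787, 795, 797, 805, 809, 811, 821, 823, 827,
  829, 839, 853, 857, 859, 861, 863, 877, 881, 883, 885, 887, 897, 903, 907, 911, 915, 919, 929,
  935, 937, 941, 947, 953, 957, 967, 969, 971, 977, 983, 987, 991, 997, 1001, 1005, 1009, 1013,
  1015, 1019, 1021, 1023, 1031, 1033, 1039, 1045, 1049, 1051, 1061, 1063, 1065, 1069, 1085, 1087,
  1091, 1093, 1095, 1097, 1103, 1105, 1109, 1113, 1117, 1123, 1129, 1131, 1151, 1153, 1163, 1171,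
  1173, 1181, 1185, 1187, 1193, 1201, 1209, 1213, 1217, 1221, 1223, 1229, 1231, 1235, 1237, 1239,
  1245, 1249, 1259, 1265, 1277, 1279, 1281, 1283, 1289, 1291, 1295, 1297, 1301, 1303, 1307, 1309,
  1311, 1319, 1321, 1327, 1335, 1353, 1361, 1367, 1373, 1381, 1399, 1407, 1409, 1419, 1423, 1427,
  1429, 1433, 1435, 1439, 1443, 1447, 1451, 1453, 1455, 1459, 1463, 1471, 1479, 1481, 1483, 1487,
  1489, 1491, 1493, 1495, 1499, 1505, 1511, 1515, 1523, 1531, 1533, 1543, 1545, 1547, 1549, 1551,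
  1553, 1559, 1567, 1571, 1579, 1581, 1583, 1595, 1597, 1599, 1601, 1605, 1607, 1609, 1613, 1615,
  1619, 1621, 1627, 1635, 1637, 1645, 1653, 1657, 1659, 1663, 1667, 1669, 1677, 1693, 1695, 1697,
  1699, 1705, 1709, 1721, 1723, 1729, 1733, 1741, 1743, 1747, 1749, 1753, 1759, 1767, 1771, 1777,
  1783, 1787, 1789, 1801, 1811, 1823, 1831, 1833, 1847, 1855, 1861, 1867, 1869, 1871, 1873, 1877,
  1879, 1885, 1887, 1889, 1901, 1905, 1907, 1913, 1931, 1933, 1947, 1949, 1951, 1955, 1965, 1973,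
  1979, 1987, 1993, 1997, 1999, 2001, 2003, 2011, 2013, 2015, 2017, 2027, 2029, 2035, 2037, 2039,
  2053, 2055, 2063, 2065, 2067, 2069, 2081, 2083, 2085, 2087, 2089, 2091, 2093, 2099, 2109, 2111,
  2113, 2121, 2129, 2131, 2135, 2137, 2139, 2141, 2143, 2153, 2161, 2163, 2179, 2185, 2193, 2203,
  2207, 2211, 2213, 2221, 2233, 2235, 2237, 2239, 2243, 2247, 2251, 2255, 2261, 2265, 2267, 2269,
  2273, 2281, 2287, 2289, 2293, 2297, 2301, 2309, 2311, 2333, 2337, 2339, 2341, 2343, 2345, 2347,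
  2351, 2355, 2357, 2365, 2371, 2373, 2377, 2379, 2381, 2383, 2387, 2389, 2393, 2397, 2399, 2405,
  2409, 2411, 2417, 2423, 2431, 2437, 2441, 2445, 2447, 2451, 2459, 2465, 2467, 2473, 2477, 2485,
  4907, 8827]

def stepL : List ℕ := [
  624, 626, 629, 630, 635, 637, 645, 646, 788, 789, 810, 822, 823, 824, 1196, 1197, 1214, 1215,
  1341, 1405, 1409, 1410, 1589, 1590, 1592, 2887, 2896, 8981, 12685]


def invSum : List ℕ → ℕ
  | [] => 0
  | k :: t => 10 ^ 15 / k + invSum t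

/-- A quick binary logarithm: correct for `0 < x < 2 ^ (2 ^ j)`. -/
def lgb : ℕ → ℕ → ℕ
  | 0, _ => 0
  | j + 1, x => bif Nat.ble (2 ^ (2 ^ j)) x then 2 ^ j + lgb j (x / 2 ^ (2 ^ j)) else lgb j x

theorem lgb_spec (j x : ℕ) (h0 : 0 < x) (h : x < 2 ^ (2 ^ j)) : 2 ^ lgb j x ≤ x ∧ x < 2 ^ (lgb j x + 1) := by
  induction j generalizing x with
  | zero =>
    simp only [lgb]
    norm_num at h ⊢
    omega
  | succ j ih =>
    simp only [lgb]
    by_cases hx : 2 ^ (2 ^ j) ≤ x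
    · rw [Nat.ble_eq_true_of_le hx, cond_true]
      have hp : 0 < 2 ^ (2 ^ j) := by positivity
      have h1 : 0 < x / 2 ^ (2 ^ j) := Nat.div_pos hx hp
      have h2 : x / 2 ^ (2 ^ j) < 2 ^ (2 ^ j) := by
        rw [Nat.div_lt_iff_lt_mul hp]
        rwa [pow_succ, pow_mul, sq] at h
      obtain ⟨a, b⟩ := ih _ h1 h2
      constructor
      · rw [pow_add]
        calc _ ≤ 2 ^ (2 ^ j) * (x / 2 ^ (2 ^ j)) := Nat.mul_le_mul_left _ a
          _ ≤ x := Nat.mul_div_le _ _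
      · rw [add_assoc, pow_add, mul_comm]
        exact (Nat.div_lt_iff_lt_mul hp).1 b
    · have : Nat.ble (2 ^ (2 ^ j)) x = false := by
        rw [Bool.eq_false_iff]
        intro hc
        exact hx (Nat.le_of_ble_eq_true hc)
      rw [this, cond_false]
      exact ih x h0 (by omega)

def loSum : List ℕ → ℕ
  | [] => 0
  | k :: t => 10 ^ 9 * lgb 13 (k ^ 512) / k + loSum t

def hiSum : List ℕ → ℕ
  | [] => 0
  | k :: t => 10 ^ 9 * (lgb 13 (k ^ 512) + 1) / k + 1 + hiSum t

theorem posL_mem : ∀ k ∈ posL, k % 2 = 1 ∧ k < 8828 := by decide +kernel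
theorem negL_mem : ∀ k ∈ negL, k % 2 = 1 ∧ k < 8828 := by decide +kernel
theorem stepL_mem : ∀ a ∈ stepL, 1 ≤ a ∧ a ≤ 62499 := by decide +kernel
theorem posL_len : posL.length = 497 := by decide +kernel
theorem negL_len : negL.length = 519 := by decide +kernel
theorem stepL_len : stepL.length = 29 := by decide +kernel
theorem inv_test : invSum posL + 980000 ≥ 520 + invSum negL ∧ invSum posL + 520 ≤ invSum negL + 980000 := by
  decide +kernel
theorem lo_test : 1467000000000 + hiSum posL ≤ loSum negL := by decide +kernel
theorem hi_test : hiSum negL ≤ 1486000000000 + loSum posL := by decide +kernel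

theorem test1p : packTest 62499 ((packSum 62499 1 posL + stepSum 62499 stepL + 1024 * 2 ^ (11 * 62499)) -
    (packSum 62499 1 negL + 1 * 2 ^ (11 * 62498))) = true := by
  decide +kernel

theorem test1n : packTest 62499 ((packSum 62499 1 negL + 1 * 2 ^ (11 * 62498) + stepSum 62499 stepL +
    1024 * 2 ^ (11 * 62499)) - packSum 62499 1 posL) = true := by
  decide +kernel

theorem test3p : packTest 62499 ((packSum 62499 3 posL + stepSum 62499 stepL + 1024 * 2 ^ (11 * 62499)) -
    (packSum 62499 3 negL + 0 * 2 ^ (11 * 62498))) = true := by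
  decide +kernel

theorem test3n : packTest 62499 ((packSum 62499 3 negL + 0 * 2 ^ (11 * 62498) + stepSum 62499 stepL +
    1024 * 2 ^ (11 * 62499)) - packSum 62499 3 posL) = true := by
  decide +kernel

theorem shf_lt (c k : ℕ) (hc : c = 1 ∨ c = 3) (hk : k % 2 = 1) : shf c k < k := by
  unfold shf; omega

theorem cnt_eq (c k m : ℕ) (hc : c = 1 ∨ c = 3) (hk : k % 2 = 1) :
    cnt (c * k % 4) (m / k) = ((m + 4 - c) / 4 + shf c k) / k := by
  have hk0 : 0 < k := by omega
  have h1 : ∀ t, (m / k + t) / 4 = ((m + k * t) / 4) / k := by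
    intro t
    rw [Nat.div_div_eq_div_mul, mul_comm 4 k, ← Nat.div_div_eq_div_mul, Nat.add_mul_div_left _ _ hk0]
  unfold cnt shf
  rcases mul_class c k hc hk with h | h
  · rw [h, show m / k + 4 - 1 = m / k + 3 by generalize m / k = z; omega, h1]
    congr 1
    rcases hc with rfl | rfl <;> omega
  · rw [h, show m / k + 4 - 3 = m / k + 1 by generalize m / k = z; omega, h1]
    congr 1
    rcases hc with rfl | rfl <;> omega

theorem cnt_approx (c n : ℕ) (z : ℝ) (hc : c = 1 ∨ c = 3) (h1 : (n : ℝ) ≤ z) (h2 : z < n + 1) :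
    |(cnt c n : ℝ) - z / 4| ≤ 3 / 4 := by
  unfold cnt
  have a1 : 4 * ((n + 4 - c) / 4) ≤ n + 4 - c := by omega
  have a2 : n + 4 - c ≤ 4 * ((n + 4 - c) / 4) + 3 := by omega
  rw [abs_le]
  rcases hc with rfl | rfl
  · have b1 : 4 * ((n + 4 - 1) / 4) ≤ n + 3 := by omega
    have b2 : n ≤ 4 * ((n + 4 - 1) / 4) := by omega
    have b1' : 4 * (((n + 4 - 1) / 4 : ℕ) : ℝ) ≤ n + 3 := by exact_mod_cast b1
    have b2' : (n : ℝ) ≤ 4 * (((n + 4 - 1) / 4 : ℕ) : ℝ) := by exact_mod_cast b2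
    constructor <;> linarith
  · have b1 : 4 * ((n + 4 - 3) / 4) ≤ n + 1 := by omega
    have b2 : n ≤ 4 * ((n + 4 - 3) / 4) + 2 := by omega
    have b1' : 4 * (((n + 4 - 3) / 4 : ℕ) : ℝ) ≤ n + 1 := by exact_mod_cast b1
    have b2' : (n : ℝ) ≤ 4 * (((n + 4 - 3) / 4 : ℕ) : ℝ) + 2 := by exact_mod_cast b2
    constructor <;> linarith

theorem Fw_trivial (S : Finset ℕ) (w : ℕ → ℝ) (hS : ∀ k ∈ S, k % 2 = 1)
    (h0 : ∑ k ∈ S, w k / k = 0) (c m : ℕ) (hc : c = 1 ∨ c = 3) :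
    |Fw S w c m| ≤ 3 / 4 * ∑ k ∈ S, |w k| := by
  have h : Fw S w c m = ∑ k ∈ S, w k * ((cnt (c * k % 4) (m / k) : ℝ) - (m : ℝ) / k / 4) := by
    have : ∀ k ∈ S, w k * ((cnt (c * k % 4) (m / k) : ℝ) - (m : ℝ) / k / 4) =
        w k * (cnt (c * k % 4) (m / k) : ℝ) - (m : ℝ) / 4 * (w k / k) := by
      intro k _; ring
    rw [Finset.sum_congr rfl this, Finset.sum_sub_distrib, ← Finset.mul_sum, h0, Fw]
    simp
  rw [h, Finset.mul_sum]
  refine (Finset.abs_sum_le_sum_abs _ _).trans (Finset.sum_le_sum fun k hk => ?_)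
  have hk2 := hS k hk
  have hk0 : (0 : ℝ) < k := by exact_mod_cast (by omega : 0 < k)
  rw [abs_mul, mul_comm]
  refine mul_le_mul_of_nonneg_right (cnt_approx _ _ _ (mul_class c k hc hk2) Nat.cast_div_le ?_)
    (abs_nonneg _)
  rw [div_lt_iff₀ hk0]
  have := Nat.lt_div_mul_add (a := m) (b := k) (by omega)
  have h4 : m < (m / k + 1) * k := by rw [add_mul, one_mul]; exact this
  exact_mod_cast h4

theorem sum_count (l : List ℕ) (S : Finset ℕ) (h : ∀ x ∈ l, x ∈ S) (f : ℕ → ℝ) :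
    ∑ i ∈ S, (l.count i : ℝ) * f i = (l.map f).sum := by
  induction l with
  | nil => simp
  | cons a t ih =>
    have ih' := ih fun x hx => h x (by simp [hx])
    have ha := h a (by simp)
    have : ∀ i ∈ S, ((a :: t).count i : ℝ) * f i = (t.count i : ℝ) * f i + if a = i then f i else 0 := by
      intro i _
      rw [List.count_cons]
      by_cases hi : a = i
      · simp [hi]; ring
      · simp [hi]
    rw [Finset.sum_congr rfl this, Finset.sum_add_distrib, ih']
    simp [ha, add_comm]

/-- The support of the weights. -/
def S0 : Finset ℕ := (Finset.range 8828).filter fun k => k % 2 = 1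

/-- The defect of the signed list. -/
noncomputable def s0 : ℝ := (posL.map fun k : ℕ => 1 / (k : ℝ)).sum - (negL.map fun k : ℕ => 1 / (k : ℝ)).sum

/-- The weights. -/
noncomputable def w0 (i : ℕ) : ℝ := (posL.count i : ℝ) - (negL.count i : ℝ) - if i = 1 then s0 else 0

theorem S0_odd : ∀ k ∈ S0, k % 2 = 1 := by
  intro k hk; exact (Finset.mem_filter.1 hk).2

theorem posL_S0 : ∀ k ∈ posL, k ∈ S0 := by
  intro k hk
  have := posL_mem k hk
  simp only [S0, Finset.mem_filter, Finset.mem_range]; exact ⟨this.2, this.1⟩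

theorem negL_S0 : ∀ k ∈ negL, k ∈ S0 := by
  intro k hk
  have := negL_mem k hk
  simp only [S0, Finset.mem_filter, Finset.mem_range]; exact ⟨this.2, this.1⟩

theorem w0_sum (f : ℕ → ℝ) :
    ∑ i ∈ S0, w0 i * f i = (posL.map f).sum - (negL.map f).sum - s0 * f 1 := by
  have h1 : 1 ∈ S0 := by simp [S0]
  have : ∀ i ∈ S0, w0 i * f i = (posL.count i : ℝ) * f i - (negL.count i : ℝ) * f i -
      if i = 1 then s0 * f i else 0 := by
    intro i _
    unfold w0
    split_ifs <;> ring
  rw [Finset.sum_congr rfl this, Finset.sum_sub_distrib, Finset.sum_sub_distrib,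
    sum_count _ _ posL_S0, sum_count _ _ negL_S0]
  simp [h1]

theorem w0_zero : ∑ k ∈ S0, w0 k / k = 0 := by
  have := w0_sum fun k => 1 / (k : ℝ)
  have e : ∀ k ∈ S0, w0 k / k = w0 k * (1 / (k : ℝ)) := by intro k _; ring
  rw [Finset.sum_congr rfl e, this, s0]
  simp

theorem invSum_bound (l : List ℕ) (hl : ∀ k ∈ l, 0 < k) :
    (invSum l : ℝ) ≤ 10 ^ 15 * (l.map fun k : ℕ => 1 / (k : ℝ)).sum ∧
      10 ^ 15 * (l.map fun k : ℕ => 1 / (k : ℝ)).sum ≤ invSum l + l.length := by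
  induction l with
  | nil => simp [invSum]
  | cons a t ih =>
    obtain ⟨h1, h2⟩ := ih fun k hk => hl k (by simp [hk])
    have ha := hl a (by simp)
    have ha' : (0 : ℝ) < a := by exact_mod_cast ha
    have b1 : ((10 ^ 15 / a : ℕ) : ℝ) ≤ ((10 ^ 15 : ℕ) : ℝ) / a := Nat.cast_div_le
    have b2 : ((10 ^ 15 : ℕ) : ℝ) / a ≤ ((10 ^ 15 / a : ℕ) : ℝ) + 1 := by
      rw [div_le_iff₀ ha']
      have := Nat.lt_div_mul_add (a := 10 ^ 15) (b := a) ha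
      have h4 : 10 ^ 15 ≤ (10 ^ 15 / a + 1) * a := by rw [add_mul, one_mul]; exact this.le
      exact_mod_cast h4
    have e : ((10 ^ 15 : ℕ) : ℝ) / a = 10 ^ 15 * (1 / (a : ℝ)) := by push_cast; ring
    rw [e] at b1 b2
    simp only [invSum, List.map_cons, List.sum_cons, List.length_cons]
    rw [Nat.cast_add, Nat.cast_add, mul_add, Nat.cast_one]
    constructor <;> linarith

theorem s0_bound : |s0| ≤ 1 / 10 ^ 9 := by
  obtain ⟨p1, p2⟩ := invSum_bound posL fun k hk => by have := posL_mem k hk; omega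
  obtain ⟨n1, n2⟩ := invSum_bound negL fun k hk => by have := negL_mem k hk; omega
  obtain ⟨t1, t2⟩ := inv_test
  have t1' : (520 : ℝ) + invSum negL ≤ invSum posL + 980000 := by exact_mod_cast t1
  have t2' : (invSum posL : ℝ) + 520 ≤ invSum negL + 980000 := by exact_mod_cast t2
  rw [posL_len] at p2
  rw [negL_len] at n2
  push_cast at p2 n2
  unfold s0
  rw [abs_le]
  constructor <;> linarith

theorem w0_abs : ∑ k ∈ S0, |w0 k| ≤ 1016 + 1 / 10 ^ 9 := by
  have h1 : 1 ∈ S0 := by simp [S0]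
  have hp := sum_count posL S0 posL_S0 fun _ => 1
  have hn := sum_count negL S0 negL_S0 fun _ => 1
  simp only [mul_one, List.map_const', List.sum_replicate, posL_len, negL_len, nsmul_eq_mul] at hp hn
  calc ∑ k ∈ S0, |w0 k| ≤ ∑ k ∈ S0, ((posL.count k : ℝ) + (negL.count k : ℝ) + if k = 1 then |s0| else 0) := by
        refine Finset.sum_le_sum fun k _ => ?_
        unfold w0
        refine (abs_sub _ _).trans (add_le_add ((abs_sub _ _).trans (add_le_add ?_ ?_)) ?_)
        · exact (Nat.abs_cast _).le
        · exact (Nat.abs_cast _).le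
        · split_ifs <;> simp
    _ = 497 + 519 + |s0| := by
        rw [Finset.sum_add_distrib, Finset.sum_add_distrib, hp, hn]
        simp [h1]
    _ ≤ _ := by linarith [s0_bound]

theorem log_term (k : ℕ) (hk : 0 < k) (hk2 : k < 8828) :
    ((10 ^ 9 * lgb 13 (k ^ 512) / k : ℕ) : ℝ) * (Real.log 2 / (512 * 10 ^ 9)) ≤ Real.log k / k ∧
      Real.log k / k ≤
        ((10 ^ 9 * (lgb 13 (k ^ 512) + 1) / k + 1 : ℕ) : ℝ) * (Real.log 2 / (512 * 10 ^ 9)) := by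
  have hk' : (0 : ℝ) < k := by exact_mod_cast hk
  have hne : k ^ 512 ≠ 0 := by positivity
  set a := lgb 13 (k ^ 512) with ha
  have l2 : 0 < Real.log 2 := Real.log_pos (by norm_num)
  have hlt : k ^ 512 < 2 ^ (2 ^ 13) := by
    calc k ^ 512 < 16384 ^ 512 := Nat.pow_lt_pow_left (by omega) (by norm_num)
      _ ≤ 2 ^ (2 ^ 13) := by
        rw [show 16384 = 2 ^ 14 by norm_num, ← pow_mul]
        exact Nat.pow_le_pow_right (by norm_num) (by norm_num)
  obtain ⟨h1, h2⟩ := lgb_spec 13 (k ^ 512) (by positivity) hlt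
  rw [← ha] at h1 h2
  have h1' : (a : ℝ) * Real.log 2 ≤ 512 * Real.log k := by
    have : ((2 : ℝ) ^ a) ≤ (k : ℝ) ^ 512 := by exact_mod_cast h1
    have := Real.log_le_log (by positivity) this
    rw [Real.log_pow, Real.log_pow] at this
    exact_mod_cast this
  have h2' : 512 * Real.log k ≤ (a + 1) * Real.log 2 := by
    have : (k : ℝ) ^ 512 ≤ ((2 : ℝ) ^ (a + 1)) := by exact_mod_cast h2.le
    have := Real.log_le_log (by positivity) this
    rw [Real.log_pow, Real.log_pow] at this
    exact_mod_cast this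
  constructor
  · have b1 : ((10 ^ 9 * a / k : ℕ) : ℝ) ≤ ((10 ^ 9 * a : ℕ) : ℝ) / k := Nat.cast_div_le
    calc _ ≤ ((10 ^ 9 * a : ℕ) : ℝ) / k * (Real.log 2 / (512 * 10 ^ 9)) := by gcongr
      _ = (a * Real.log 2 / 512) / k := by push_cast; ring
      _ ≤ _ := by gcongr; linarith
  · have b2 : ((10 ^ 9 * (a + 1) : ℕ) : ℝ) / k ≤ ((10 ^ 9 * (a + 1) / k + 1 : ℕ) : ℝ) := by
      rw [div_le_iff₀ hk']
      have := Nat.lt_div_mul_add (a := 10 ^ 9 * (a + 1)) (b := k) hk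
      have h4 : 10 ^ 9 * (a + 1) ≤ (10 ^ 9 * (a + 1) / k + 1) * k := by
        rw [add_mul, one_mul]; exact this.le
      exact_mod_cast h4
    calc Real.log k / k ≤ ((a + 1) * Real.log 2 / 512) / k := by gcongr; linarith
      _ = ((10 ^ 9 * (a + 1) : ℕ) : ℝ) / k * (Real.log 2 / (512 * 10 ^ 9)) := by push_cast; ring
      _ ≤ _ := by gcongr

theorem logSum_bound (l : List ℕ) (hl : ∀ k ∈ l, 0 < k ∧ k < 8828) :
    (loSum l : ℝ) * (Real.log 2 / (512 * 10 ^ 9)) ≤ (l.map fun k : ℕ => Real.log k / (k : ℝ)).sum ∧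
      (l.map fun k : ℕ => Real.log k / (k : ℝ)).sum ≤ hiSum l * (Real.log 2 / (512 * 10 ^ 9)) := by
  induction l with
  | nil => simp [loSum, hiSum]
  | cons a t ih =>
    obtain ⟨h1, h2⟩ := ih fun k hk => hl k (by simp [hk])
    obtain ⟨t1, t2⟩ := log_term a (hl a (by simp)).1 (hl a (by simp)).2
    simp only [loSum, hiSum, List.map_cons, List.sum_cons]
    rw [Nat.cast_add, Nat.cast_add _ (hiSum t), add_mul, add_mul]
    constructor <;> linarith

/-- The main constant. -/
noncomputable def M0 : ℝ := -(1 / 4) * ∑ k ∈ S0, w0 k * (Real.log k / k)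

theorem M0_bounds : 0.496 ≤ M0 ∧ M0 ≤ 0.504 := by
  obtain ⟨p1, p2⟩ := logSum_bound posL fun k hk => by have := posL_mem k hk; omega
  obtain ⟨n1, n2⟩ := logSum_bound negL fun k hk => by have := negL_mem k hk; omega
  have t1 : (1467000000000 : ℝ) + hiSum posL ≤ loSum negL := by exact_mod_cast lo_test
  have t2 : (hiSum negL : ℝ) ≤ 1486000000000 + loSum posL := by exact_mod_cast hi_test
  have l1 := Real.log_two_gt_d9
  have l2 := Real.log_two_lt_d9
  unfold M0
  rw [w0_sum fun k => Real.log k / (k : ℝ)]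
  set x := Real.log 2 / (512 * 10 ^ 9) with hx
  have hx0 : 0 < x := by positivity
  have hx1 : 512 * 10 ^ 9 * x = Real.log 2 := by rw [hx]; field_simp
  have u1 := mul_le_mul_of_nonneg_right t1 hx0.le
  have u2 := mul_le_mul_of_nonneg_right t2 hx0.le
  simp only [Nat.cast_one, Real.log_one, zero_div, mul_zero, sub_zero]
  constructor <;> linarith

/-- The counting sums over the two lists. -/
def Psum (c : ℕ) (l : List ℕ) (i : ℕ) : ℤ := (l.map fun k => (((i + shf c k) / k : ℕ) : ℤ)).sum

def gsum (i : ℕ) : ℤ := (stepL.map fun a => if a ≤ i then (1 : ℤ) else 0).sum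

theorem gsum_aux (l : List ℕ) (i : ℕ) : 0 ≤ (l.map fun a => if a ≤ i then (1 : ℤ) else 0).sum ∧
    (l.map fun a => if a ≤ i then (1 : ℤ) else 0).sum ≤ l.length := by
  induction l with
  | nil => simp
  | cons a t ih =>
    simp only [List.map_cons, List.sum_cons, List.length_cons]
    push_cast
    split_ifs <;> omega

theorem gsum_bounds (i : ℕ) : 0 ≤ gsum i ∧ gsum i ≤ 29 := by
  have := gsum_aux stepL i
  rw [stepL_len] at this
  exact this

theorem Psum_cast (c m : ℕ) (hc : c = 1 ∨ c = 3) (l : List ℕ) (hl : ∀ k ∈ l, k % 2 = 1) :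
    (l.map fun k : ℕ => (cnt (c * k % 4) (m / k) : ℝ)).sum = ((Psum c l ((m + 4 - c) / 4) : ℤ) : ℝ) := by
  unfold Psum
  induction l with
  | nil => simp
  | cons a t ih =>
    simp only [List.map_cons, List.sum_cons]
    rw [ih fun k hk => hl k (by simp [hk]), cnt_eq c a m hc (hl a (by simp))]
    rw [Int.cast_add, Int.cast_natCast]

theorem Fw_eq (c m : ℕ) (hc : c = 1 ∨ c = 3) :
    Fw S0 w0 c m = ((Psum c posL ((m + 4 - c) / 4) : ℤ) : ℝ) - ((Psum c negL ((m + 4 - c) / 4) : ℤ) : ℝ) -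
      s0 * (((m + 4 - c) / 4 : ℕ) : ℝ) := by
  unfold Fw
  rw [w0_sum fun k : ℕ => (cnt (c * k % 4) (m / k) : ℝ),
    Psum_cast c m hc posL fun k hk => (posL_mem k hk).1,
    Psum_cast c m hc negL fun k hk => (negL_mem k hk).1]
  have : cnt (c * 1 % 4) (m / 1) = (m + 4 - c) / 4 := by
    unfold cnt
    rcases hc with rfl | rfl <;> simp
  rw [this]

theorem s0_mul (i : ℕ) (hi : i ≤ 62499) : |s0 * (i : ℝ)| ≤ 7 / 10 ^ 5 := by
  have h : (i : ℝ) ≤ 62499 := by exact_mod_cast hi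
  rw [abs_mul, Nat.abs_cast]
  calc |s0| * (i : ℝ) ≤ 1 / 10 ^ 9 * 62499 :=
        mul_le_mul s0_bound h (Nat.cast_nonneg _) (by norm_num)
    _ ≤ _ := by norm_num

theorem Fw_triv0 (c m : ℕ) (hc : c = 1 ∨ c = 3) : |Fw S0 w0 c m| ≤ 762.001 := by
  refine (Fw_trivial S0 w0 S0_odd w0_zero c m hc).trans ?_
  have := w0_abs
  linarith

theorem Psum_diff (c i : ℕ) (hc : c = 1 ∨ c = 3) (hi : i ≤ 62499) :
    |Psum c posL i - Psum c negL i| ≤ 762 := by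
  have h1 := Fw_eq c (4 * i) hc
  have h2 := Fw_triv0 c (4 * i) hc
  have e : (4 * i + 4 - c) / 4 = i := by rcases hc with rfl | rfl <;> omega
  rw [e] at h1
  have h3 := s0_mul i hi
  rw [h1] at h2
  rw [abs_le] at h2 h3
  have : (|Psum c posL i - Psum c negL i| : ℤ) < 763 := by
    rw [abs_lt]
    constructor
    · have : (-763 : ℝ) < ((Psum c posL i - Psum c negL i : ℤ) : ℝ) := by push_cast; linarith
      exact_mod_cast this
    · have : ((Psum c posL i - Psum c negL i : ℤ) : ℝ) < 763 := by push_cast; linarith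
      exact_mod_cast this
  omega

theorem core_aux (c t : ℕ) (hc : c = 1 ∨ c = 3) (ht : t ≤ 1)
    (tp : packTest 62499 ((packSum 62499 c posL + stepSum 62499 stepL + 1024 * 2 ^ (11 * 62499)) -
      (packSum 62499 c negL + t * 2 ^ (11 * 62498))) = true)
    (tn : packTest 62499 ((packSum 62499 c negL + t * 2 ^ (11 * 62498) + stepSum 62499 stepL +
      1024 * 2 ^ (11 * 62499)) - packSum 62499 c posL) = true) (i : ℕ) (hi : i ≤ 62499) :
    |Psum c posL i - Psum c negL i - t * (if 1 ≤ i then 1 else 0)| ≤ gsum i := by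
  have iP : Inc 62499 (fun i => Psum c posL i) (packSum 62499 c posL : ℤ) :=
    Inc_list 62499 c posL fun k hk => shf_lt c k hc (posL_mem k hk).1
  have iN : Inc 62499 (fun i => Psum c negL i) (packSum 62499 c negL : ℤ) :=
    Inc_list 62499 c negL fun k hk => shf_lt c k hc (negL_mem k hk).1
  have iG : Inc 62499 (fun i => gsum i) (stepSum 62499 stepL : ℤ) :=
    Inc_steps 62499 stepL fun a ha => (stepL_mem a ha).2
  have iC := (Inc_step 0 62499 (by norm_num)).smul 1024
  have iT := (Inc_step 1 62499 (by norm_num)).smul t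
  have bd : ∀ i ≤ 62499, -762 ≤ Psum c posL i - Psum c negL i ∧ Psum c posL i - Psum c negL i ≤ 762 ∧
      0 ≤ gsum i ∧ gsum i ≤ 29 ∧ 0 ≤ (t : ℤ) * (if 1 ≤ i then 1 else 0) ∧
      (t : ℤ) * (if 1 ≤ i then 1 else 0) ≤ 1 := by
    intro i hi
    have h1 := abs_le.1 (Psum_diff c i hc hi)
    have h2 := gsum_bounds i
    refine ⟨h1.1, h1.2, h2.1, h2.2, ?_, ?_⟩ <;> split_ifs <;> omega
  rw [Nat.sub_zero] at iC
  rw [show 62499 - 1 = 62498 by norm_num] at iT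
  have jp := ((iP.add iG).add iC).add (iN.add iT).neg
  rw [← sub_eq_add_neg, ← Nat.cast_mul, ← Nat.cast_mul, ← Nat.cast_add, ← Nat.cast_add, ← Nat.cast_add] at jp
  have jn := (((iN.add iT).add iG).add iC).add iP.neg
  rw [← sub_eq_add_neg, ← Nat.cast_mul, ← Nat.cast_mul, ← Nat.cast_add, ← Nat.cast_add, ← Nat.cast_add] at jn
  have hp := packTest_correct 62499 _ _ _ jp
    (by
      intro i hi
      have := bd i hi
      simp only [Nat.zero_le, if_true]
      push_cast
      omega) tp i hi
  have hn := packTest_correct 62499 _ _ _ jn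
    (by
      intro i hi
      have := bd i hi
      simp only [Nat.zero_le, if_true]
      push_cast
      omega) tn i hi
  have := bd i hi
  simp only [Nat.zero_le, if_true] at hp hn
  push_cast at hp hn
  rw [abs_le]
  constructor <;> omega

theorem core (c i : ℕ) (hc : c = 1 ∨ c = 3) (hi : i ≤ 62499) :
    |Psum c posL i - Psum c negL i - (if c = 1 then (if 1 ≤ i then 1 else 0) else 0)| ≤ gsum i := by
  rcases hc with rfl | rfl
  · have := core_aux 1 1 (Or.inl rfl) le_rfl test1p test1n i hi
    simpa only [Nat.cast_one, one_mul, if_true] using this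
  · have := core_aux 3 0 (Or.inr rfl) (by norm_num) test3p test3n i hi
    simpa only [Nat.cast_zero, zero_mul, show ¬ (3 = 1) by norm_num, if_false] using this

/-- The envelope. -/
noncomputable def D0 (y : ℕ) : ℝ :=
  ((stepL.map fun a => 4 * a - 3).count y : ℝ) + (if y = 1 then 7 / 10 ^ 5 else 0) + (if y = 249997 then 764 else 0)

def J0 : Finset ℕ := Finset.Ioc 0 249997

theorem D0_nonneg (y : ℕ) : 0 ≤ D0 y := by
  unfold D0
  have : (0 : ℝ) ≤ ((stepL.map fun a => 4 * a - 3).count y : ℝ) := Nat.cast_nonneg _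
  split_ifs <;> linarith

theorem D0_sum (f : ℕ → ℝ) : ∑ y ∈ J0, D0 y * f y =
    (stepL.map fun a => f (4 * a - 3)).sum + 7 / 10 ^ 5 * f 1 + 764 * f 249997 := by
  have hm : ∀ x ∈ (stepL.map fun a => 4 * a - 3), x ∈ J0 := by
    intro x hx
    obtain ⟨a, ha, rfl⟩ := List.mem_map.1 hx
    have := stepL_mem a ha
    simp only [J0, Finset.mem_Ioc]
    omega
  have h1 : 1 ∈ J0 := Finset.mem_Ioc.2 (by norm_num)
  have h2 : 249997 ∈ J0 := Finset.mem_Ioc.2 (by norm_num)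
  have : ∀ y ∈ J0, D0 y * f y = ((stepL.map fun a => 4 * a - 3).count y : ℝ) * f y +
      (if y = 1 then 7 / 10 ^ 5 * f y else 0) + (if y = 249997 then 764 * f y else 0) := by
    intro y _
    unfold D0
    generalize ((stepL.map fun a => 4 * a - 3).count y : ℝ) = z
    split_ifs <;> ring
  rw [Finset.sum_congr rfl this, Finset.sum_add_distrib, Finset.sum_add_distrib, sum_count _ _ hm,
    Finset.sum_ite_eq' J0 1, Finset.sum_ite_eq' J0 249997, if_pos h1, if_pos h2, List.map_map]
  rfl

theorem gsum_le (l : List ℕ) (i m : ℕ) (him : ∀ a, 1 ≤ a → a ≤ i → 4 * a - 3 ≤ m) (hl : ∀ a ∈ l, 1 ≤ a) :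
    (((l.map fun a => if a ≤ i then (1 : ℤ) else 0).sum : ℤ) : ℝ) ≤
      (l.map fun a => if 4 * a - 3 ≤ m then (1 : ℝ) else 0).sum := by
  induction l with
  | nil => simp
  | cons a t ih =>
    have h := ih fun a ha => hl a (by simp [ha])
    have ha := hl a (by simp)
    simp only [List.map_cons, List.sum_cons, Int.cast_add]
    refine add_le_add ?_ h
    by_cases h1 : a ≤ i
    · rw [if_pos h1, if_pos (him a ha h1)]; simp
    · rw [if_neg h1]; split_ifs <;> simp

theorem hE0 (c m : ℕ) (hc : c = 1 ∨ c = 3) (hm : 1 ≤ m) :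
    |Fw S0 w0 c m - (if c = 1 then 1 else 0)| ≤ ∑ y ∈ J0, D0 y * (if y ≤ m then 1 else 0) := by
  rw [D0_sum, if_pos hm]
  by_cases hY : 249997 ≤ m
  · have h0 : (0 : ℝ) ≤ (stepL.map fun a => if 4 * a - 3 ≤ m then (1 : ℝ) else 0).sum := by
      refine List.sum_nonneg ?_
      intro x hx
      obtain ⟨a, _, rfl⟩ := List.mem_map.1 hx
      split_ifs <;> norm_num
    have h1 := abs_le.1 (Fw_triv0 c m hc)
    rw [if_pos hY, abs_le]
    constructor <;> split_ifs <;> linarith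
  · have hi : (m + 4 - c) / 4 ≤ 62499 := by rcases hc with rfl | rfl <;> omega
    have h1 := core c _ hc hi
    have h2 := gsum_le stepL ((m + 4 - c) / 4) m
      (by intro a ha h; rcases hc with rfl | rfl <;> omega) fun a ha => (stepL_mem a ha).1
    have h3 := abs_le.1 (s0_mul _ hi)
    rw [Fw_eq c m hc, if_neg hY]
    set i := (m + 4 - c) / 4 with hidef
    have e : (if c = 1 then (if 1 ≤ i then (1 : ℤ) else 0) else 0) = if c = 1 then 1 else 0 := by
      rcases hc with rfl | rfl
      · rw [if_pos rfl, if_pos rfl, if_pos (by omega)]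
      · rfl
    rw [e] at h1
    have h1' : |((Psum c posL i : ℤ) : ℝ) - ((Psum c negL i : ℤ) : ℝ) - (if c = 1 then 1 else 0)| ≤ (gsum i : ℝ) := by
      exact_mod_cast h1
    have h2' : (gsum i : ℝ) ≤ (stepL.map fun a => if 4 * a - 3 ≤ m then (1 : ℝ) else 0).sum := h2
    rw [abs_le] at h1' ⊢
    constructor <;> linarith

theorem D0_const : ∑ y ∈ J0, D0 y / y ≤ 0.0105 := by
  have : ∀ y ∈ J0, D0 y / y = D0 y * (1 / (y : ℝ)) := by intro y _; ring
  rw [Finset.sum_congr rfl this, D0_sum]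
  norm_num [stepL]

theorem sqrt_log_le (n j : ℕ) (hj : 2 ≤ j) (t : ℝ) (ht : ((4 ^ j : ℕ) : ℝ) ≤ t) (hn : n = 2 * j) :
    √t * Real.log t ≤ (n * Real.log 2 / 2 ^ j) * t := by
  have e : ((4 ^ j : ℕ) : ℝ) = (2 ^ j) ^ 2 := by
    push_cast
    rw [← pow_mul, mul_comm, pow_mul]; norm_num
  have h16 : Real.exp 2 ≤ 16 := by
    have h := Real.exp_one_lt_d9
    have : Real.exp 2 = Real.exp 1 * Real.exp 1 := by rw [← Real.exp_add]; norm_num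
    rw [this]
    nlinarith [Real.exp_pos 1]
  have h4 : (16 : ℝ) ≤ ((4 ^ j : ℕ) : ℝ) := by
    have : 4 ^ 2 ≤ 4 ^ j := Nat.pow_le_pow_right (by norm_num) hj
    exact_mod_cast this
  have h0 : (0 : ℝ) < t := by linarith
  have h := Real.log_div_sqrt_antitoneOn (a := ((4 ^ j : ℕ) : ℝ)) (b := t) (by simp only [Set.mem_Ici]; linarith)
    (by simp only [Set.mem_Ici]; linarith) ht
  beta_reduce at h
  rw [e, Real.sqrt_sq (by positivity), Real.log_pow, Real.log_pow] at h
  have hs : √t * √t = t := Real.mul_self_sqrt h0.le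
  have hs0 : 0 < √t := Real.sqrt_pos.2 h0
  calc √t * Real.log t = Real.log t / √t * (√t * √t) := by field_simp
    _ = Real.log t / √t * t := by rw [hs]
    _ ≤ (n * Real.log 2 / 2 ^ j) * t := by
      refine mul_le_mul_of_nonneg_right (h.trans (le_of_eq ?_)) h0.le
      rw [hn]; push_cast; ring

theorem psi_first (n : ℕ) (hn : 4096 ≤ n) : PsiO n ≤ 1.65 * n := by
  have hn' : (4096 : ℝ) ≤ n := by exact_mod_cast hn
  have h1 := Chebyshev.psi_le (x := n) (by linarith)
  have h2 := sqrt_log_le 12 6 (by norm_num) n (by norm_num; exact hn) (by norm_num)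
  have l2 := Real.log_two_lt_d9
  have l4 : Real.log 4 = 2 * Real.log 2 := by
    rw [show (4 : ℝ) = 2 ^ 2 by norm_num, Real.log_pow]; norm_num
  rw [l4] at h1
  have h3 := PsiO_le n
  norm_num at h2
  have h4 : Real.log 2 * n ≤ 0.6931471808 * n := mul_le_mul_of_nonneg_right l2.le (by linarith)
  have h5 : 12 * Real.log 2 / 64 * (n : ℝ) = 3 / 16 * (Real.log 2 * n) := by ring
  have h6 : 2 * √(n : ℝ) * Real.log n = 2 * (√(n : ℝ) * Real.log n) := by ring
  rw [h5] at h2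
  rw [h6] at h1
  linarith

theorem err_bound (N : ℕ) (hN : 2 ^ 30 ≤ N) :
    (∑ k ∈ S0, |w0 k|) * (2 * Real.log N + 1) ≤ 0.0001 * N := by
  have hN' : (2 : ℝ) ^ 30 ≤ N := by exact_mod_cast hN
  have hN2 : (1073741824 : ℝ) ≤ N := by exact_mod_cast hN
  have he := Real.exp_one_lt_d9
  have h := Real.log_div_self_antitoneOn (a := (2 : ℝ) ^ 30) (b := N)
    (by simp only [Set.mem_Ici]; norm_num; linarith)
    (by simp only [Set.mem_Ici]; linarith) hN'
  beta_reduce at h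
  have hN0 : (0 : ℝ) < N := by linarith
  rw [div_le_iff₀ hN0, Real.log_pow] at h
  have l2 := Real.log_two_lt_d9
  have h1 : ((30 : ℕ) : ℝ) * Real.log 2 / 2 ^ 30 ≤ 21 / 2 ^ 30 := by
    gcongr; push_cast; linarith
  have h2 := h.trans (mul_le_mul_of_nonneg_right h1 hN0.le)
  have hl0 : 0 ≤ Real.log N := Real.log_nonneg (by linarith)
  have h3 := mul_le_mul_of_nonneg_right w0_abs (by linarith : 0 ≤ 2 * Real.log N + 1)
  norm_num at h2 h3 ⊢
  linarith

theorem pass (T : ℕ) (C : ℝ) (hC : 0 ≤ C) (hT : ∀ n, T ≤ n → PsiO n ≤ C * n) (r N : ℕ) (hr : r = 1 ∨ r = 3)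
    (hN : 2 ^ 30 ≤ N) (hTN : T * 249997 ≤ N) :
    |PsiR r N - M0 * N| ≤ (0.0105 * C + 0.0001) * N := by
  have h := abstract_bound S0 J0 w0 D0 S0_odd w0_zero (fun y hy => (Finset.mem_Ioc.1 hy).1)
    (fun y _ => D0_nonneg y) hE0 r N C hr
    (by
      intro k hk
      have := Finset.mem_range.1 (Finset.mem_filter.1 hk).1
      omega)
    (by
      intro y hy
      obtain ⟨h1, h2⟩ := Finset.mem_Ioc.1 hy
      refine (hT _ ?_).trans (mul_le_mul_of_nonneg_left Nat.cast_div_le hC)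
      rw [Nat.le_div_iff_mul_le h1]
      exact (Nat.mul_le_mul_left _ h2).trans hTN)
  have e := err_bound N hN
  have h2 := mul_le_mul_of_nonneg_right (mul_le_mul_of_nonneg_left D0_const hC) (Nat.cast_nonneg (α := ℝ) N)
  unfold M0
  linarith

theorem psi_second (N : ℕ) (hN : 2 ^ 30 ≤ N) : PsiO N ≤ 1.05 * N := by
  have h1 := abs_le.1 (pass 4096 1.65 (by norm_num) psi_first 1 N (Or.inl rfl) hN (by omega))
  have h3 := abs_le.1 (pass 4096 1.65 (by norm_num) psi_first 3 N (Or.inr rfl) hN (by omega))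
  rw [PsiO_eq]
  have h0 : (0 : ℝ) ≤ N := Nat.cast_nonneg N
  have hM := mul_le_mul_of_nonneg_right M0_bounds.2 h0
  norm_num at h1 h3 hM ⊢
  linarith [h1.2, h3.2]

theorem PsiR_bound (r N : ℕ) (hr : r = 1 ∨ r = 3) (hN : 2 ^ 48 ≤ N) :
    |PsiR r N - M0 * N| ≤ 0.011126 * N := by
  have h1 := pass (2 ^ 30) 1.05 (by norm_num) psi_second r N hr (by omega) (by omega)
  have h0 : (0 : ℝ) ≤ N := Nat.cast_nonneg N
  refine h1.trans (mul_le_mul_of_nonneg_right ?_ h0)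
  norm_num

theorem large_case (r : ℕ) (hr : r = 1 ∨ r = 3) (x : ℝ) (hx : 2 ^ 48 ≤ x) :
    ∃ p : ℕ, p.Prime ∧ x < (p : ℝ) ∧ (p : ℝ) ≤ 1.048 * x ∧ p % 4 = r := by
  by_contra hcon
  push Not at hcon
  have hx0 : (0 : ℝ) ≤ x := by norm_num at hx; linarith
  set a := ⌊x⌋₊ with ha
  set b := ⌊1.048 * x⌋₊ with hb
  have hax : (a : ℝ) ≤ x := Nat.floor_le hx0
  have hax' : x < a + 1 := Nat.lt_floor_add_one x
  have hbx : (b : ℝ) ≤ 1.048 * x := Nat.floor_le (by linarith)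
  have hbx' : 1.048 * x < b + 1 := Nat.lt_floor_add_one _
  have ha48 : 2 ^ 48 ≤ a := Nat.le_floor (by exact_mod_cast hx)
  have hab : a ≤ b := Nat.floor_mono (by linarith)
  have h1 := abs_le.1 (PsiR_bound r a hr ha48)
  have h2 := abs_le.1 (PsiR_bound r b hr (by omega))
  have key : PsiR r b - PsiR r a ≤ Chebyshev.psi b - Chebyshev.theta b := by
    rw [Chebyshev.psi_sub_theta_eq_sum_not_prime, Nat.floor_natCast, Finset.sum_filter]
    unfold PsiR
    rw [← Finset.Ioc_union_Ioc_eq_Ioc (Nat.zero_le a) hab,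
      Finset.sum_union (Finset.disjoint_left.2 fun d hd hd' => by
        have := Finset.mem_Ioc.1 hd
        have := Finset.mem_Ioc.1 hd'
        omega),
      Finset.sum_union (Finset.disjoint_left.2 fun d hd hd' => by
        have := Finset.mem_Ioc.1 hd
        have := Finset.mem_Ioc.1 hd'
        omega)]
    have g1 : ∑ d ∈ Finset.Ioc a b, (if d % 4 = r then ArithmeticFunction.vonMangoldt d else 0) ≤
        ∑ d ∈ Finset.Ioc a b, (if ¬ Nat.Prime d then ArithmeticFunction.vonMangoldt d else 0) := by
      refine Finset.sum_le_sum fun d hd => ?_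
      obtain ⟨hd1, hd2⟩ := Finset.mem_Ioc.1 hd
      have hv : 0 ≤ ArithmeticFunction.vonMangoldt d := ArithmeticFunction.vonMangoldt_nonneg
      by_cases hp : d.Prime
      · have q1 : x < d := (Nat.floor_lt hx0).1 hd1
        have q2 : (d : ℝ) ≤ 1.048 * x := (Nat.le_floor_iff (by linarith)).1 hd2
        rw [if_neg (hcon d hp q1 q2), if_neg (not_not.2 hp)]
      · rw [if_pos hp]
        split_ifs <;> linarith
    have g2 : 0 ≤ ∑ d ∈ Finset.Ioc 0 a, (if ¬ Nat.Prime d then ArithmeticFunction.vonMangoldt d else 0) := by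
      refine Finset.sum_nonneg fun d _ => ?_
      have hv : 0 ≤ ArithmeticFunction.vonMangoldt d := ArithmeticFunction.vonMangoldt_nonneg
      split_ifs <;> linarith
    linarith
  have hb48 : (2 : ℝ) ^ 48 ≤ b := by exact_mod_cast ha48.trans hab
  have k1 := Chebyshev.psi_sub_theta_le (x := b) (by norm_num at hb48; linarith)
  have k2 := sqrt_log_le 48 24 (by norm_num) b (by norm_num at hb48 ⊢; exact_mod_cast hb48) (by norm_num)
  have l2 := Real.log_two_lt_d9
  have b0 : (0 : ℝ) ≤ b := Nat.cast_nonneg b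
  have k3 : (((48 : ℕ) : ℝ) * Real.log 2 / 2 ^ 24) * b ≤ 0.00001 * b := by
    refine mul_le_mul_of_nonneg_right ?_ b0
    push_cast
    rw [div_le_iff₀ (by norm_num)]
    norm_num
    linarith
  have e : 2 * √(b : ℝ) * Real.log b = 2 * (√(b : ℝ) * Real.log b) := by ring
  rw [e] at k1
  have hM := M0_bounds
  have m1 : M0 * (0.048 * x - 1) ≤ M0 * b - M0 * a := by
    have := mul_le_mul_of_nonneg_left (by linarith : 0.048 * x - 1 ≤ (b : ℝ) - a) (by linarith : 0 ≤ M0)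
    linarith
  have m2 : 0.496 * (0.048 * x - 1) ≤ M0 * (0.048 * x - 1) := by
    refine mul_le_mul_of_nonneg_right hM.1 ?_
    norm_num at hx ⊢
    linarith
  norm_num at *
  linarith [h1.1, h1.2, h2.1, h2.2]

/-- Trial division by `2, ..., f + 1`. -/
def td (p : ℕ) : ℕ → Bool
  | 0 => true
  | f + 1 => bif Nat.beq (p % (f + 2)) 0 then false else td p f

theorem td_spec (p f : ℕ) (h : td p f = true) (d : ℕ) (h2 : 2 ≤ d) (hd : d ≤ f + 1) : ¬ d ∣ p := by
  induction f with
  | zero => omega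
  | succ f ih =>
    unfold td at h
    cases hb : Nat.beq (p % (f + 2)) 0
    · rw [hb, cond_false] at h
      rcases Nat.lt_or_ge (f + 1) d with hlt | hge
      · have : d = f + 2 := by omega
        rw [this]
        intro hdvd
        have h0 := Nat.mod_eq_zero_of_dvd hdvd
        rw [h0] at hb
        exact absurd hb (by decide)
      · exact ih h hge
    · rw [hb, cond_true] at h
      exact absurd h (by decide)

theorem prime_of_td (p f : ℕ) (hp : 2 ≤ p) (hf : p < (f + 2) * (f + 2)) (h : td p f = true) : p.Prime := by
  by_contra hn
  have h1 := Nat.minFac_sq_le_self (by omega) hn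
  have h2 := (Nat.minFac_prime (n := p) (by omega)).two_le
  refine td_spec p f h p.minFac h2 ?_ (Nat.minFac_dvd p)
  by_contra hc
  push Not at hc
  have : (f + 2) * (f + 2) ≤ p.minFac ^ 2 := by
    rw [sq]
    exact Nat.mul_le_mul hc hc
  omega

/-- Powers of two modulo `p`. -/
def pm (p : ℕ) : ℕ → ℕ → ℕ
  | 0, e => 2 ^ e
  | f + 1, e => (pm p f (e / 256)) ^ 256 * 2 ^ (e % 256) % p

theorem pm_spec (p f e : ℕ) : pm p f e ≡ 2 ^ e [MOD p] := by
  induction f generalizing e with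
  | zero => rfl
  | succ f ih =>
    unfold pm
    refine (Nat.mod_modEq _ _).trans ?_
    have h : 2 ^ e = (2 ^ (e / 256)) ^ 256 * 2 ^ (e % 256) := by
      rw [← pow_mul, ← pow_add, mul_comm (e / 256) 256, Nat.div_add_mod]
    rw [h]
    exact ((ih _).pow 256).mul_right _

/-- A Pocklington certificate for `m * q ^ (k + 1) + 1`. -/
theorem pock (m q k u : ℕ) (hm : 0 < m) (hq : q.Prime) (hlt : m * q ^ (k + 1) + 1 ≤ q ^ (2 * (k + 1)))
    (hu : u ≡ 2 ^ (m * q ^ k) [MOD (m * q ^ (k + 1) + 1)])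
    (hg : Nat.gcd (u + m * q ^ (k + 1)) (m * q ^ (k + 1) + 1) = 1)
    (h1 : u ^ q % (m * q ^ (k + 1) + 1) = 1) : (m * q ^ (k + 1) + 1).Prime := by
  set p := m * q ^ (k + 1) + 1 with hp
  have hq0 : 0 < q ^ (k + 1) := pow_pos hq.pos _
  have hp2 : 2 ≤ p := by
    have := Nat.mul_pos hm hq0
    omega
  by_contra hn
  have hl : p.minFac.Prime := Nat.minFac_prime (by omega)
  have hsq := Nat.minFac_sq_le_self (by omega) hn
  set l := p.minFac with hl'
  have hlp : l ∣ p := Nat.minFac_dvd p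
  have : Fact l.Prime := ⟨hl⟩
  have c1 : ((u : ℕ) : ZMod l) = ((2 : ZMod l) ^ m) ^ q ^ k := by
    have := (ZMod.natCast_eq_natCast_iff _ _ _).2 (hu.of_dvd hlp)
    rw [this]; push_cast; rw [pow_mul]
  have c2 : ((u : ℕ) : ZMod l) ^ q = 1 := by
    have h : u ^ q ≡ 1 [MOD p] := by
      unfold Nat.ModEq
      rw [h1, Nat.mod_eq_of_lt (by omega)]
    have := (ZMod.natCast_eq_natCast_iff _ _ _).2 (h.of_dvd hlp)
    push_cast at this
    exact this
  have c3 : ¬ ((2 : ZMod l) ^ m) ^ q ^ k = 1 := by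
    rw [← c1]
    intro hc
    have h2 : ((u + m * q ^ (k + 1) : ℕ) : ZMod l) = 0 := by
      have h3 : ((p : ℕ) : ZMod l) = 0 := (ZMod.natCast_eq_zero_iff _ _).2 hlp
      rw [hp] at h3
      push_cast at h3 ⊢
      rw [hc, add_comm]
      exact h3
    have h4 := (ZMod.natCast_eq_zero_iff _ _).1 h2
    have h5 := Nat.dvd_gcd h4 hlp
    rw [hg] at h5
    exact hl.one_lt.ne' (Nat.dvd_one.1 h5)
  have c4 : ((2 : ZMod l) ^ m) ^ q ^ (k + 1) = 1 := by
    rw [pow_succ q k, pow_mul, ← c1, c2]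
  have : Fact q.Prime := ⟨hq⟩
  have c5 := orderOf_eq_prime_pow c3 c4
  have c6 : (2 : ZMod l) ^ m ≠ 0 := by
    intro h0
    rw [h0, zero_pow hq0.ne'] at c4
    exact zero_ne_one c4
  have c7 := ZMod.orderOf_dvd_card_sub_one c6
  rw [c5] at c7
  have c8 := Nat.le_of_dvd (by have := hl.two_le; omega) c7
  have c9 : q ^ (k + 1) < l := by have := hl.two_le; omega
  have c10 : (q ^ (k + 1)) ^ 2 < l ^ 2 := Nat.pow_lt_pow_left c9 (by norm_num)
  rw [← pow_mul, mul_comm (k + 1) 2] at c10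
  omega

def certOK (c : ℕ × ℕ × ℕ) : Bool :=
  Nat.ble 1 c.1 && Nat.ble 2 c.2.1 && td c.2.1 (c.2.1 - 2) &&
    Nat.ble (c.1 * c.2.1 ^ (c.2.2 + 1) + 1) (c.2.1 ^ (2 * (c.2.2 + 1))) &&
    Nat.beq (Nat.gcd (pm (c.1 * c.2.1 ^ (c.2.2 + 1) + 1) 6 (c.1 * c.2.1 ^ c.2.2) + c.1 * c.2.1 ^ (c.2.2 + 1))
      (c.1 * c.2.1 ^ (c.2.2 + 1) + 1)) 1 &&
    Nat.beq ((pm (c.1 * c.2.1 ^ (c.2.2 + 1) + 1) 6 (c.1 * c.2.1 ^ c.2.2)) ^ c.2.1 %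
      (c.1 * c.2.1 ^ (c.2.2 + 1) + 1)) 1

def certVal (c : ℕ × ℕ × ℕ) : ℕ := c.1 * c.2.1 ^ (c.2.2 + 1) + 1

theorem certOK_spec (c : ℕ × ℕ × ℕ) (h : certOK c = true) : (certVal c).Prime := by
  obtain ⟨m, q, k⟩ := c
  simp only [certOK, Bool.and_eq_true] at h
  obtain ⟨⟨⟨⟨⟨h1, h2⟩, h3⟩, h4⟩, h5⟩, h6⟩ := h
  have hq2 := Nat.le_of_ble_eq_true h2
  refine pock m q k _ (Nat.le_of_ble_eq_true h1)
    (prime_of_td q (q - 2) hq2 ?_ h3) (Nat.le_of_ble_eq_true h4) (pm_spec _ 6 _)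
    (Nat.eq_of_beq_eq_true h5) (Nat.eq_of_beq_eq_true h6)
  rw [Nat.sub_add_cancel hq2]
  exact Nat.lt_of_lt_of_le (by omega : q < 2 * q) (Nat.mul_le_mul_right q hq2)

/-- A chain starting at `a` with ratios at most `1.048` in the class `r`, ending at or above `E`. -/
def chain (r E : ℕ) : ℕ → List ℕ → Bool
  | a, [] => Nat.ble E a
  | a, p :: t => Nat.beq (p % 4) r && Nat.ble (1000 * p) (1048 * a) && chain r E p t

theorem chain_spec (r E a : ℕ) (l : List ℕ) (hl : ∀ p ∈ l, p.Prime) (h : chain r E a l = true) (x : ℝ)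
    (ha : (a : ℝ) ≤ x) (hx : x < E) :
    ∃ p : ℕ, p.Prime ∧ x < (p : ℝ) ∧ (p : ℝ) ≤ 1.048 * x ∧ p % 4 = r := by
  induction l generalizing a with
  | nil =>
    unfold chain at h
    have h1 : (E : ℝ) ≤ a := by exact_mod_cast Nat.le_of_ble_eq_true h
    linarith
  | cons p t ih =>
    simp only [chain, Bool.and_eq_true] at h
    obtain ⟨⟨h1, h2⟩, h3⟩ := h
    have h2' : (1000 : ℝ) * p ≤ 1048 * a := by exact_mod_cast Nat.le_of_ble_eq_true h2
    by_cases hc : x < p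
    · refine ⟨p, hl p (by simp), hc, ?_, Nat.eq_of_beq_eq_true h1⟩
      norm_num
      linarith
    · exact ih p (fun p hp => hl p (by simp [hp])) h3 (not_lt.1 hc)


/-- Trial division for numbers below `602 ^ 2`. -/
def tdOK (p : ℕ) : Bool := Nat.ble 2 p && Nat.ble (p + 1) ((600 + 2) * (600 + 2)) && td p 600

theorem tdOK_spec (p : ℕ) (h : tdOK p = true) : p.Prime := by
  simp only [tdOK, Bool.and_eq_true] at h
  obtain ⟨⟨h1, h2⟩, h3⟩ := h
  exact prime_of_td p _ (Nat.le_of_ble_eq_true h1) (Nat.le_of_ble_eq_true h2) h3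

def smallL1 : List ℕ := [
  929, 953, 997, 1033, 1069, 1117, 1153, 1201, 1249, 1301, 1361, 1409, 1453, 1493, 1553, 1621,
  1697, 1777, 1861, 1949, 2029, 2113, 2213, 2309, 2417, 2521, 2633, 2753, 2861, 2969, 3109, 3257,
  3413, 3557, 3709, 3881, 4057, 4241, 4441, 4649, 4861, 5081, 5309, 5557, 5821, 6089, 6373, 6673,
  6977, 7309, 7649, 8009, 8389, 8761, 9181, 9613, 10069, 10529, 10993, 11497, 12041, 12613, 13217,
  13841, 14489, 15173, 15901, 16661, 17449, 18269, 19141, 20029, 20981, 21977, 23029, 24133,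
  25261, 26449, 27701, 29021, 30389, 31817, 33329, 34913, 36541, 38281, 40093, 42017, 44029,
  46141, 48353, 50593, 53017, 55541, 58193, 60961, 63857, 66889, 70061, 73421, 76913, 80557,
  84421, 88469, 92693, 97117, 101749, 106621, 111733, 117053, 122653, 128521, 134681, 141121,
  147881, 154937, 162293, 170081, 178169, 186709, 195593, 204973, 214789, 225089, 235889, 247201,
  259033, 271429, 284429, 298049, 312353]

def certL1 : List (ℕ × ℕ × ℕ) := [
  (340, 31, 1), (120, 53, 1), (552, 5, 3), (492, 3, 5), (156, 7, 3), (280, 37, 1), (472, 29, 1), (312, 11, 2), 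
  (192, 47, 1), (240, 43, 1), (348, 11, 2), (576, 29, 1), (228, 47, 1), (240, 13, 2), (400, 37, 1), (340, 41, 1), 
  (696, 29, 1), (444, 37, 1), (288, 47, 1), (792, 29, 1), (828, 29, 1), (548, 11, 2), (792, 31, 1), (828, 31, 1), 
  (264, 5, 4), (360, 7, 3), (660, 37, 1), (508, 43, 1), (732, 11, 2), (292, 59, 1), (800, 11, 2), (504, 47, 1), 
  (372, 5, 4), (888, 37, 1), (688, 43, 1), (604, 13, 2), (444, 5, 4), (1092, 11, 2), (220, 19, 2), (940, 41, 1), 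
  (588, 53, 1), (496, 59, 1), (1312, 37, 1), (1116, 41, 1), (888, 47, 1), (928, 47, 1), (72, 31, 2), (936, 7, 3), 
  (752, 5, 4), (1120, 13, 2), (1164, 47, 1), (1600, 41, 1), (1524, 43, 1), (1344, 13, 2), (1648, 43, 1), 
  (1456, 3, 6), (1804, 43, 1), (508, 19, 2), (1656, 13, 2), (1092, 59, 1), (1820, 3, 6), (1884, 47, 1), 
  (1988, 3, 6), (1896, 7, 3), (160, 31, 2), (2080, 7, 3), (1064, 17, 2), (1948, 53, 1), (1832, 5, 4), 
  (1896, 5, 4), (208, 31, 2), (2076, 5, 4), (1948, 59, 1), (584, 23, 2), (1084, 19, 2), (1132, 19, 2), 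
  (484, 7, 4), (348, 29, 2), (2840, 5, 4), (2976, 5, 4), (1420, 19, 2), (2932, 59, 1), (1552, 19, 2), 
  (1624, 19, 2), (2376, 17, 2), (2480, 17, 2), (1860, 19, 2), (1948, 19, 2), (2040, 19, 2), (184, 43, 2), 
  (1260, 23, 2), (316, 37, 2), (996, 7, 4), (2668, 3, 7), (3716, 17, 2), (3884, 17, 2), (700, 13, 3), 
  (3048, 19, 2), (3184, 19, 2), (3488, 3, 7), (4872, 17, 2), (3820, 3, 7), (380, 41, 2), (264, 47, 2), 
  (2360, 23, 2), (360, 17, 3), (4788, 3, 7), (5012, 3, 7), (2196, 5, 5), (1472, 29, 2), (2568, 11, 3), 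
  (2520, 5, 5), (6280, 3, 7), (3540, 23, 2), (6580, 19, 2), (1656, 13, 3), (4068, 23, 2), (3312, 5, 5), 
  (4448, 23, 2), (2324, 29, 2), (572, 47, 2), (3160, 3, 8), (4168, 5, 5), (4368, 5, 5), (2928, 29, 2), 
  (4788, 5, 5), (5352, 11, 3), (5608, 11, 3), (3528, 29, 2), (5752, 5, 5), (7740, 23, 2), (8108, 23, 2), 
  (1500, 41, 2), (8904, 23, 2), (7260, 5, 5), (4872, 29, 2), (7408, 7, 4), (1560, 17, 3), (6932, 3, 8), 
  (11748, 23, 2), (5028, 31, 2), (5496, 13, 3), (10528, 5, 5), (6036, 13, 3), (12336, 11, 3), (676, 23, 3), 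
  (12684, 5, 5), (13284, 5, 5), (13920, 5, 5), (14584, 5, 5), (8356, 13, 3), (4936, 37, 2), (3136, 17, 3), 
  (13944, 3, 8), (11792, 29, 2), (10108, 31, 2), (6220, 37, 2), (3952, 17, 3), (2940, 7, 5), (18392, 3, 8), 
  (12732, 31, 2), (5084, 5, 6), (13972, 31, 2), (4200, 47, 2), (16000, 13, 3), (16768, 13, 3), (17568, 13, 3), 
  (21560, 29, 2), (4228, 19, 3), (4908, 7, 5), (8780, 41, 2), (9200, 41, 2), (7956, 17, 3), (23368, 31, 2), 
  (3552, 59, 2), (26748, 13, 3), (6804, 7, 5), (5208, 11, 4), (5904, 53, 2), (11580, 43, 2), (13988, 41, 2), 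
  (19944, 37, 2), (17928, 3, 9), (21900, 37, 2), (7808, 53, 2), (17672, 41, 2), (21612, 3, 9), (8300, 11, 4), 
  (27652, 37, 2), (18456, 43, 2), (19336, 43, 2), (27280, 3, 9), (24492, 41, 2), (22236, 43, 2), (23708, 5, 6), 
  (28160, 41, 2), (40140, 37, 2), (26800, 43, 2), (21500, 47, 2), (6300, 13, 4), (16464, 53, 2), (32880, 5, 6), 
  (45584, 3, 9), (33772, 17, 3), (28472, 47, 2), (26332, 7, 5), (40828, 43, 2), (28912, 7, 5), (5040, 29, 3), 
  (23196, 11, 4), (46872, 17, 3), (52512, 5, 6), (55032, 5, 6), (34572, 19, 3), (68508, 41, 2), (63336, 5, 6), 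
  (49944, 47, 2), (65052, 17, 3), (54840, 47, 2), (75040, 43, 2), (74860, 17, 3), (55692, 7, 5), (82212, 17, 3), 
  (55216, 19, 3), (72620, 47, 2), (2796, 41, 3), (63532, 19, 3), (66576, 19, 3), (87576, 47, 2), (64004, 53, 2), 
  (25564, 5, 7), (59076, 3, 10), (68096, 11, 4), (64876, 3, 10), (92412, 19, 3), (107272, 7, 5), (33856, 5, 7), 
  (67484, 59, 2), (97560, 53, 2), (94512, 11, 4), (57000, 23, 3), (42792, 5, 7), (108768, 11, 4), 
  (103628, 3, 10), (93672, 59, 2), (98160, 59, 2), (141908, 53, 2), (137472, 11, 4), (144068, 11, 4), 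
  (9820, 19, 4), (65232, 5, 7), (130020, 59, 2), (75364, 13, 4), (104788, 23, 3), (82756, 13, 4), 
  (115068, 23, 3), (47700, 29, 3), (172148, 59, 2), (14964, 19, 4), (99396, 5, 7), (22968, 11, 5), 
  (109164, 5, 7), (120360, 13, 4), (66208, 29, 3), (132172, 13, 4), (62440, 7, 6), (76188, 29, 3), 
  (30132, 37, 3), (159396, 13, 4), (43680, 17, 4), (26248, 19, 4), (183444, 13, 4), (192244, 13, 4), 
  (191500, 5, 7), (147508, 3, 11), (154588, 3, 11), (162008, 3, 11), (243016, 13, 4), (242076, 5, 7), 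
  (15396, 23, 4), (146820, 29, 3), (293100, 13, 4), (46060, 19, 4), (34960, 43, 3), (337356, 13, 4), 
  (353532, 13, 4), (167040, 7, 6), (369064, 5, 7), (31300, 13, 5), (171436, 31, 3), (21028, 53, 3), 
  (70224, 19, 4), (64488, 41, 3), (206788, 31, 3), (376576, 3, 11), (227100, 31, 3), (413588, 3, 11), 
  (279700, 7, 6), (293124, 7, 6), (129528, 5, 8), (41192, 23, 4), (142260, 5, 8), (117592, 19, 4), 
  (191392, 3, 12), (66252, 13, 5), (210204, 3, 12), (426472, 7, 6), (46648, 53, 3), (112828, 43, 3), 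
  (490860, 7, 6), (123916, 43, 3), (539104, 7, 6), (291836, 3, 12), (305844, 3, 12), (320524, 3, 12), 
  (377184, 17, 4), (226668, 19, 4), (636868, 31, 3), (667428, 31, 3), (133828, 13, 5), (361200, 37, 3), 
  (768180, 31, 3), (380660, 5, 8), (161424, 13, 5), (418080, 5, 8), (438140, 5, 8), (74008, 59, 3), 
  (77560, 59, 3), (693680, 17, 4), (647412, 3, 12), (436860, 19, 4), (604872, 37, 3), (420432, 41, 3), 
  (257944, 13, 5), (270324, 13, 5), (483912, 41, 3), (578752, 19, 4), (941980, 3, 12), (326064, 13, 5), 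
  (583696, 41, 3), (885012, 5, 8), (149496, 59, 3), (766708, 19, 4), (1018652, 5, 8), (1112512, 37, 3), 
  (180328, 59, 3), (1436336, 3, 12), (1228736, 5, 8), (1287684, 5, 8), (932748, 41, 3), (1559176, 11, 5), 
  (1169080, 19, 4), (1712448, 11, 5), (155004, 29, 4), (690292, 13, 5), (144664, 17, 5), (178412, 29, 4), 
  (1548832, 19, 4), (411556, 5, 9), (1701060, 19, 4), (1562116, 41, 3), (586272, 53, 3), (1715632, 41, 3), 
  (1486096, 43, 3), (259592, 29, 4), (272052, 29, 4), (1710516, 43, 3), (2168832, 41, 3), (1330644, 13, 5), 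
  (2382028, 41, 3), (2063332, 43, 3), (1545604, 3, 13), (1343916, 7, 7), (1682112, 13, 5), (1078380, 53, 3), 
  (1130140, 53, 3), (455624, 29, 4), (2864712, 43, 3), (847048, 59, 3), (2204376, 47, 3), (3297340, 43, 3), 
  (1497252, 53, 3), (1569120, 53, 3), (2688184, 13, 5), (2112716, 23, 4), (2472048, 7, 7), (2590680, 7, 7), 
  (1291668, 59, 3), (3398260, 13, 5), (2670776, 23, 4), (2798972, 23, 4), (3275020, 7, 7), (4054780, 47, 3), 
  (4249408, 47, 3), (2225260, 5, 9), (2332072, 5, 9), (3024816, 53, 3), (4338888, 7, 7), (4547140, 7, 7), 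
  (4765392, 7, 7), (4473044, 23, 4), (3823840, 53, 3), (2203648, 3, 14), (3393292, 5, 9), (2420256, 3, 14), 
  (3003532, 59, 3), (1580184, 17, 5), (5065908, 53, 3), (1463232, 31, 4), (5563888, 53, 3), (5830936, 53, 3), 
  (4937452, 5, 9), (6404128, 53, 3), (2581868, 29, 4), (7033660, 53, 3), (2835668, 29, 4), (265776, 47, 4), 
  (5271792, 59, 3), (3263904, 29, 4), (1738624, 7, 8), (7529188, 5, 9), (3756812, 29, 4), (4144020, 11, 6), 
  (5898108, 3, 14), (9082168, 5, 9), (9518100, 5, 9), (1404760, 37, 4), (8424880, 59, 3), (5490132, 11, 6), 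
  (4645140, 17, 5), (9697180, 59, 3), (1775848, 37, 4), (6291948, 29, 4), (9425784, 3, 14), (11697388, 59, 3), 
  (5188588, 31, 4), (678780, 47, 4), (11370008, 3, 14), (8335868, 29, 4), (7423488, 17, 5), (9155300, 29, 4), 
  (13715260, 3, 14), (4223904, 5, 10), (5356276, 7, 8), (1530168, 23, 5), (8291988, 31, 4), (5288176, 19, 5), 
  (12711548, 29, 4), (5808016, 19, 5), (1934388, 23, 5)]

def smallL3 : List ℕ := [
  919, 947, 991, 1031, 1063, 1103, 1151, 1187, 1231, 1283, 1327, 1367, 1427, 1487, 1543, 1607,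
  1667, 1747, 1823, 1907, 1987, 2063, 2143, 2243, 2347, 2459, 2551, 2671, 2791, 2903, 3023, 3167,
  3319, 3467, 3631, 3803, 3967, 4139, 4327, 4523, 4723, 4943, 5179, 5419, 5659, 5927, 6211, 6491,
  6791, 7103, 7411, 7759, 8123, 8467, 8867, 9283, 9719, 10163, 10639, 11131, 11587, 12143, 12703,
  13291, 13907, 14563, 15259, 15991, 16747, 17539, 18379, 19259, 20183, 21143, 22147, 23203,
  24251, 25411, 26627, 27883, 29207, 30559, 32003, 33503, 35111, 36791, 38543, 40387, 42323,
  44351, 46471, 48679, 50971, 53411, 55967, 58631, 61403, 64327, 67411, 70639, 74027, 77563,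
  81283, 85159, 89231, 93503, 97987, 102679, 107603, 112759, 118171, 123803, 129719, 135911,
  142427, 149251, 156371, 163871, 171719, 179951, 188579, 197599, 207079, 217003, 227419, 238331,
  249763, 261739, 274283, 287387, 301159]

def certL3 : List (ℕ × ℕ × ℕ) := [
  (142, 47, 1), (450, 3, 5), (406, 29, 1), (370, 31, 1), (594, 5, 3), (162, 7, 3), (306, 11, 2), (318, 11, 2), 
  (526, 29, 1), (130, 59, 1), (282, 41, 1), (510, 31, 1), (606, 29, 1), (190, 53, 1), (330, 41, 1), (690, 29, 1), 
  (214, 53, 1), (454, 37, 1), (94, 19, 2), (802, 29, 1), (730, 31, 1), (306, 7, 3), (246, 5, 4), (478, 41, 1), 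
  (498, 41, 1), (634, 37, 1), (946, 31, 1), (434, 3, 6), (450, 47, 1), (562, 43, 1), (810, 11, 2), (610, 43, 1), 
  (538, 13, 2), (566, 3, 6), (942, 37, 1), (562, 7, 3), (1062, 11, 2), (798, 43, 1), (1114, 37, 1), (718, 3, 6), 
  (746, 3, 6), (774, 47, 1), (810, 13, 2), (846, 13, 2), (886, 13, 2), (586, 59, 1), (42, 37, 2), (790, 53, 1), 
  (1058, 3, 6), (1438, 41, 1), (726, 59, 1), (1570, 41, 1), (1494, 43, 1), (1314, 13, 2), (1374, 13, 2), 
  (642, 17, 2), (1782, 43, 1), (1570, 13, 2), (1650, 3, 6), (1086, 59, 1), (1650, 7, 3), (842, 17, 2), 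
  (1386, 5, 4), (1442, 5, 4), (1966, 7, 3), (718, 19, 2), (1482, 59, 1), (1546, 59, 1), (2346, 7, 3), 
  (242, 29, 2), (2202, 53, 1), (442, 11, 3), (278, 29, 2), (1446, 17, 2), (2130, 59, 1), (2486, 5, 4), 
  (2338, 59, 1), (1734, 17, 2), (2850, 5, 4), (1418, 3, 7), (1486, 3, 7), (834, 23, 2), (630, 7, 4), 
  (3178, 59, 1), (3330, 59, 1), (498, 29, 2), (754, 7, 4), (906, 11, 3), (466, 31, 2), (2118, 19, 2), 
  (2318, 3, 7), (558, 13, 3), (1370, 23, 2), (1030, 7, 4), (2622, 19, 2), (770, 29, 2), (1258, 5, 5), 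
  (1318, 5, 5), (3138, 19, 2), (1438, 5, 5), (790, 31, 2), (1010, 29, 2), (3762, 19, 2), (946, 13, 3), 
  (4122, 19, 2), (4318, 19, 2), (2550, 23, 2), (2218, 11, 3), (2178, 5, 5), (2930, 23, 2), (542, 41, 2), 
  (5966, 3, 7), (5974, 19, 2), (2554, 7, 4), (1510, 31, 2), (1582, 31, 2), (2506, 3, 8), (3298, 5, 5), 
  (2214, 29, 2), (4650, 23, 2), (4866, 23, 2), (2082, 31, 2), (778, 17, 3), (4650, 11, 3), (3622, 3, 8), 
  (5086, 11, 3), (5326, 11, 3), (5230, 5, 5), (2998, 13, 3), (7374, 23, 2), (6418, 11, 3), (8090, 23, 2), 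
  (6126, 7, 4), (3618, 31, 2), (9278, 23, 2), (7026, 7, 4), (10166, 23, 2), (7710, 7, 4), (1970, 41, 2), 
  (1702, 17, 3), (1434, 47, 2), (9982, 5, 5), (5478, 31, 2), (11670, 11, 3), (12222, 11, 3), (9522, 3, 8), 
  (11686, 7, 4), (7206, 13, 3), (4254, 37, 2), (9258, 29, 2), (12022, 3, 8), (14754, 7, 4), (13202, 3, 8), 
  (16198, 7, 4), (11694, 29, 2), (10026, 31, 2), (15902, 3, 8), (11010, 31, 2), (14094, 29, 2), (5226, 41, 2), 
  (4518, 17, 3), (16214, 29, 2), (14506, 13, 3), (8566, 37, 2), (15262, 31, 2), (4050, 7, 5), (17482, 13, 3), 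
  (10326, 37, 2), (22470, 29, 2), (20106, 13, 3), (21070, 13, 3), (12442, 37, 2), (4434, 53, 2), (4646, 53, 2), 
  (9278, 5, 6), (11018, 41, 2), (27858, 13, 3), (9982, 17, 3), (10458, 17, 3), (990, 31, 3), (18910, 37, 2), 
  (3586, 23, 3), (8938, 7, 5), (18642, 3, 9), (14766, 5, 6), (7506, 11, 4), (7866, 11, 4), (19262, 41, 2), 
  (27450, 37, 2), (14034, 47, 2), (14706, 47, 2), (19158, 17, 3), (10410, 11, 4), (34686, 37, 2), 
  (23158, 43, 2), (38094, 37, 2), (39922, 37, 2), (13158, 11, 4), (26590, 17, 3), (39414, 3, 9), (48150, 37, 2), 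
  (37086, 41, 2), (22762, 7, 5), (47510, 3, 9), (24990, 7, 5), (36886, 17, 3), (31094, 47, 2), (49086, 41, 2), 
  (17262, 59, 2), (20970, 3, 10), (33090, 7, 5), (59166, 41, 2), (61998, 41, 2), (64970, 41, 2), (68078, 41, 2), 
  (27750, 3, 10), (39522, 19, 3), (30470, 3, 10), (71146, 43, 2), (36806, 11, 4), (78130, 43, 2), 
  (23262, 23, 3), (24378, 23, 3), (2530, 41, 3), (57490, 19, 3), (52734, 53, 2), (4390, 37, 3), (12190, 29, 3), 
  (60690, 53, 2), (53450, 3, 10), (84342, 7, 5), (64566, 11, 4), (29350, 13, 4), (40810, 23, 3), (74310, 11, 4), 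
  (70794, 3, 10), (46962, 23, 3), (92510, 53, 2), (89618, 11, 4), (18366, 7, 6), (121630, 19, 3), (42526, 5, 7), 
  (84762, 59, 2), (65190, 23, 3), (23214, 7, 6), (28326, 29, 3), (141018, 53, 2), (78622, 23, 3), 
  (143166, 11, 4), (65070, 13, 4), (123282, 59, 2), (149786, 3, 10), (33766, 7, 6), (74602, 5, 7), 
  (172394, 3, 10), (114358, 23, 3), (47418, 29, 3), (89970, 5, 7), (14874, 19, 4), (46866, 7, 6), 
  (21582, 37, 3), (79762, 3, 11), (83578, 3, 11), (18798, 19, 4), (91786, 3, 11), (55350, 31, 3), 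
  (10978, 47, 3), (68166, 7, 6), (20818, 41, 3), (157822, 5, 7), (230866, 23, 3), (127382, 3, 11), 
  (253518, 23, 3), (80502, 31, 3), (278418, 23, 3), (57506, 17, 4), (60266, 17, 4), (126786, 29, 3), 
  (50142, 37, 3), (28806, 43, 3), (41682, 19, 4), (276894, 5, 7), (60478, 37, 3), (319890, 13, 4), 
  (134782, 31, 3), (333942, 5, 7), (368190, 13, 4), (269582, 3, 11), (182310, 7, 6), (55678, 41, 3), 
  (200206, 7, 6), (244302, 29, 3), (28134, 23, 4), (268306, 29, 3), (374206, 3, 11), (253062, 7, 6), 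
  (116538, 37, 3), (117194, 5, 8), (339150, 29, 3), (177050, 17, 4), (106390, 19, 4), (141350, 5, 8), 
  (148134, 5, 8), (428682, 29, 3), (40270, 53, 3), (97402, 43, 3), (218886, 3, 12), (195138, 37, 3), 
  (216346, 11, 5), (487726, 7, 6), (170002, 19, 4), (310698, 17, 4), (163606, 41, 3), (588310, 7, 6), 
  (259970, 5, 8), (283926, 37, 3), (225214, 19, 4), (366562, 3, 12), (663186, 31, 3), (131538, 47, 3), 
  (728370, 31, 3), (360930, 5, 8), (799950, 31, 3), (413106, 37, 3), (237330, 43, 3), (107766, 53, 3), 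
  (627626, 17, 4), (657750, 17, 4), (522198, 37, 3), (578950, 11, 5), (434098, 19, 4), (142762, 53, 3), 
  (183414, 23, 4), (633434, 5, 8), (731866, 11, 5), (235698, 7, 7), (180466, 53, 3), (528102, 41, 3), 
  (980914, 3, 12), (580002, 41, 3), (607842, 41, 3), (1016086, 11, 5), (1328598, 17, 4), (409578, 13, 5), 
  (836730, 19, 4), (635098, 43, 3), (665578, 43, 3), (697522, 43, 3), (1567530, 3, 12), (1397466, 37, 3), 
  (426450, 23, 4), (589486, 47, 3), (1701646, 11, 5), (654522, 13, 5), (1695174, 5, 8), (439746, 53, 3), 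
  (1861814, 5, 8), (1951178, 5, 8), (620510, 23, 4), (726046, 7, 7), (449166, 5, 9), (797406, 7, 7), 
  (1409130, 43, 3), (1786690, 41, 3), (1872438, 41, 3), (270342, 29, 4), (2056486, 41, 3), (2459514, 19, 4), 
  (1107118, 7, 7), (2367030, 41, 3), (2480646, 41, 3), (2148730, 43, 3), (788346, 5, 9), (1671538, 13, 5), 
  (2473210, 43, 3), (1537122, 7, 7), (476546, 11, 6), (2016298, 13, 5), (1584662, 23, 4), (2190510, 47, 3), 
  (1943182, 7, 7), (2405842, 47, 3), (1559250, 53, 3), (2695770, 3, 13), (2825158, 3, 13), (2456502, 7, 7), 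
  (518386, 31, 4), (330598, 19, 5), (1669102, 5, 9), (1409722, 59, 3), (3742874, 3, 13), (1921158, 5, 9), 
  (3410670, 7, 7), (4308102, 3, 13), (4425402, 47, 3), (4688614, 13, 5), (4114162, 7, 7), (1732234, 3, 14), 
  (2667390, 5, 9), (3459742, 53, 3), (4962750, 7, 7), (5200962, 7, 7), (5450602, 7, 7), (4173346, 53, 3), 
  (4373658, 53, 3), (1855926, 11, 6), (1945010, 11, 6), (6171510, 23, 4), (2029550, 29, 4), (2238726, 11, 6), 
  (2346182, 11, 6), (1985074, 17, 5), (2080354, 17, 5), (1838158, 31, 4), (1366690, 7, 8), (7325026, 53, 3), 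
  (4998798, 59, 3), (5238730, 59, 3), (4636350, 3, 14), (7139298, 5, 9), (2552158, 31, 4), (3929418, 11, 6), 
  (8217466, 5, 9), (4100238, 29, 4), (6142446, 3, 14), (3226350, 31, 4), (658474, 43, 4), (5205858, 11, 6), 
  (7409398, 3, 14), (7765034, 3, 14), (5692898, 29, 4), (4274406, 31, 4), (8937718, 3, 14), (11091682, 59, 3), 
  (6867150, 29, 4), (6115522, 17, 5), (3288262, 19, 5), (2583718, 13, 6), (8283614, 29, 4), (12409434, 3, 14), 
  (13005078, 3, 14), (10035606, 11, 6), (14283498, 3, 14), (3423034, 13, 6), (11551190, 11, 6), 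
  (12105642, 11, 6), (12686702, 11, 6), (2236346, 41, 4), (13933838, 11, 6), (13873650, 29, 4)]


theorem small1_prime : smallL1.all tdOK = true := by decide +kernel
theorem small3_prime : smallL3.all tdOK = true := by decide +kernel
theorem cert1_prime : certL1.all certOK = true := by decide +kernel
theorem cert3_prime : certL3.all certOK = true := by decide +kernel
theorem chain1 : chain 1 (2 ^ 48) 887 (smallL1 ++ certL1.map certVal) = true := by decide +kernel
theorem chain3 : chain 3 (2 ^ 48) 887 (smallL3 ++ certL3.map certVal) = true := by decide +kernel

theorem list_prime (s : List ℕ) (c : List (ℕ × ℕ × ℕ)) (hs : s.all tdOK = true) (hc : c.all certOK = true) :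
    ∀ p ∈ s ++ c.map certVal, p.Prime := by
  intro p hp
  rcases List.mem_append.1 hp with h | h
  · exact tdOK_spec p (List.all_eq_true.1 hs p h)
  · obtain ⟨a, ha, rfl⟩ := List.mem_map.1 h
    exact certOK_spec a (List.all_eq_true.1 hc a ha)

/-- For `r ∈ {1, 3}` and every real `x ≥ 887`, the interval `(x, 1.048x]` contains a prime
congruent to `r` modulo `4`. -/
theorem exists_prime_mod_four_in_interval (r : ℕ) (hr : r ∈ ({1, 3} : Set ℕ)) (x : ℝ) (hx : 887 ≤ x) :
    ∃ p : ℕ, p.Prime ∧ x < (p : ℝ) ∧ (p : ℝ) ≤ 1.048 * x ∧ p % 4 = r := by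
  have hr' : r = 1 ∨ r = 3 := hr
  by_cases h : 2 ^ 48 ≤ x
  · exact large_case r hr' x h
  · have h' : x < ((2 ^ 48 : ℕ) : ℝ) := by
      have h2 := not_le.1 h
      norm_num at h2 ⊢
      exact h2
    rcases hr' with rfl | rfl
    · exact chain_spec 1 (2 ^ 48) 887 _ (list_prime _ _ small1_prime cert1_prime) chain1 x
        (by exact_mod_cast hx) h'
    · exact chain_spec 3 (2 ^ 48) 887 _ (list_prime _ _ small3_prime cert3_prime) chain3 x
        (by exact_mod_cast hx) h'
end

section
/- Let u be a negative integer, write v = -u with v ≥ 2, and suppose n ≥ max{14, 2v-1}. Assume the polynomial 𝓛_n^{(u)}(x) is irreducible over ℚ and that there exists a prime p with 2v - 3 < p < n - 2. Then the Galois group of 𝓛_n^{(u)}(x) over ℚ contains the alternating group A_n (i.e., the image of the Galois group acting on the n roots contains all even permutations of the roots). -/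
open Polynomial Finset

/-- The polynomial `𝓛_n^{(u)}(x) = ∑_{j=0}^n C(n,j) (∏_{i=j+1}^n (1+2(u+i))) xʲ`,
viewed as a polynomial over `ℚ` (it has integer coefficients). -/
noncomputable def lcal (n : ℕ) (u : ℤ) : Polynomial ℚ :=
  ∑ j ∈ Finset.range (n + 1),
    Polynomial.C ((n.choose j : ℚ) * ∏ i ∈ Finset.Icc (j + 1) n, (1 + 2 * ((u : ℚ) + (i : ℚ))))
      * Polynomial.X ^ j

section BertrandPlus
open Real

theorem bplus_real_main_inequality {x : ℝ} (x_large : (512 : ℝ) ≤ x) :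
    x * (2 * x) ^ (√(2 * x) + 1) * 4 ^ (2 * x / 3) ≤ 4 ^ x := by
  let f : ℝ → ℝ := fun x => log x + (√(2 * x) * log (2 * x) + log (2 * x)) - log 4 / 3 * x
  have hf' : ∀ x, 0 < x → 0 < x * (2 * x) ^ (√(2 * x) + 1) / 4 ^ (x / 3) := fun x h =>
    div_pos (mul_pos h (rpow_pos_of_pos (mul_pos two_pos h) _)) (rpow_pos_of_pos four_pos _)
  have hf : ∀ x, 0 < x → f x = log (x * (2 * x) ^ (√(2 * x) + 1) / 4 ^ (x / 3)) := by
    intro x h5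
    have h6 := mul_pos (zero_lt_two' ℝ) h5
    have h7 := rpow_pos_of_pos h6 (√(2 * x) + 1)
    rw [log_div (mul_pos h5 h7).ne' (rpow_pos_of_pos four_pos _).ne', log_mul h5.ne' h7.ne',
      log_rpow h6, log_rpow zero_lt_four]
    simp only [f]
    ring
  have h5 : 0 < x := lt_of_lt_of_le (by norm_num1) x_large
  rw [← div_le_one (rpow_pos_of_pos four_pos x), ← div_div_eq_mul_div, ← rpow_sub four_pos, ←
    mul_div 2 x, mul_div_left_comm, ← mul_one_sub, (by norm_num1 : (1 : ℝ) - 2 / 3 = 1 / 3),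
    mul_one_div, ← log_nonpos_iff (hf' x h5).le, ← hf x h5]
  have h : ConcaveOn ℝ (Set.Ioi 0.5) f := by
    apply ConcaveOn.sub
    · apply ConcaveOn.add
      · exact strictConcaveOn_log_Ioi.concaveOn.subset
          (Set.Ioi_subset_Ioi (by norm_num)) (convex_Ioi 0.5)
      apply ConcaveOn.add
      · convert!
          ((strictConcaveOn_sqrt_mul_log_Ioi.concaveOn.comp_linearMap ((2 : ℝ) • LinearMap.id)))
          using 1
        ext x
        simp only [Set.mem_Ioi, Set.mem_preimage, LinearMap.smul_apply,
          LinearMap.id_coe, id_eq, smul_eq_mul]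
        rw [← mul_lt_mul_iff_right₀ (two_pos)]
        norm_num1
        rfl
      · have h1 := (strictConcaveOn_log_Ioi.concaveOn.comp_linearMap
          ((2 : ℝ) • (LinearMap.id : ℝ →ₗ[ℝ] ℝ)))
        refine ConcaveOn.subset h1 ?_ (convex_Ioi 0.5)
        intro y hy
        simp only [Set.mem_Ioi, Set.mem_preimage, LinearMap.smul_apply,
          LinearMap.id_coe, id_eq, smul_eq_mul] at *
        linarith
    apply ConvexOn.smul
    · refine div_nonneg (log_nonneg (by norm_num1)) (by norm_num1)
    · exact convexOn_id (convex_Ioi (0.5 : ℝ))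
  suffices ∃ x1 x2, 0.5 < x1 ∧ x1 < x2 ∧ x2 ≤ x ∧ 0 ≤ f x1 ∧ f x2 ≤ 0 by
    obtain ⟨x1, x2, h1, h2, h0, h3, h4⟩ := this
    exact (h.right_le_of_le_left'' h1 ((h1.trans h2).trans_le h0) h2 h0 (h4.trans h3)).trans h4
  refine ⟨18, 512, by norm_num1, by norm_num1, x_large, ?_, ?_⟩
  · have : √(2 * 18 : ℝ) = 6 := (sqrt_eq_iff_mul_self_eq_of_pos (by norm_num1)).mpr (by norm_num1)
    have h7 : (6 : ℝ) + 1 = 7 := by norm_num1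
    rw [hf _ (by norm_num1), log_nonneg_iff (by positivity), this, one_le_div (by norm_num1), h7]
    norm_num1
  · have : √(2 * 512) = 32 :=
      (sqrt_eq_iff_mul_self_eq_of_pos (by norm_num1)).mpr (by norm_num1)
    have h7 : (32 : ℝ) + 1 = 33 := by norm_num1
    rw [hf _ (by norm_num1), log_nonpos_iff (hf' _ (by norm_num1)).le, this,
        div_le_one (by positivity), h7]
    conv in 512 => equals 2 ^ 9 => norm_num1
    conv in 2 * 512 => equals 2 ^ 10 => norm_num1
    conv in 33 => rw [← Nat.cast_ofNat]
    rw [rpow_natCast, ← pow_mul, ← pow_add]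
    conv in 4 => equals 2 ^ (2 : ℝ) => rw [rpow_two]; norm_num1
    rw [← rpow_mul, ← rpow_natCast]
    on_goal 1 => apply rpow_le_rpow_of_exponent_le
    all_goals norm_num1

end BertrandPlus

section BertrandPlusNat
open Nat

theorem bplus_main_inequality {n : ℕ} (n_large : 512 ≤ n) :
    n * (2 * n) ^ (sqrt (2 * n) + 1) * 4 ^ (2 * n / 3) ≤ 4 ^ n := by
  rw [← @cast_le ℝ]
  have key : (n : ℝ) * (2 * (n : ℝ)) ^ (((sqrt (2 * n) + 1 : ℕ)) : ℝ) *
      4 ^ (((2 * n / 3 : ℕ)) : ℝ) ≤ 4 ^ (n : ℝ) := by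
    refine _root_.trans ?_ (bplus_real_main_inequality (by exact_mod_cast n_large))
    have h2 : (((sqrt (2 * n) + 1 : ℕ)) : ℝ) ≤ √(2 * (n : ℝ)) + 1 := by
      push_cast
      have := @Real.nat_sqrt_le_real_sqrt (2 * n)
      push_cast at this
      linarith
    have h3 : (((2 * n / 3 : ℕ)) : ℝ) ≤ 2 * (n : ℝ) / 3 := cast_div_le.trans (by norm_cast)
    have h1 : (1 : ℝ) ≤ 2 * n := by
      have : 1 ≤ 2 * n := by omega
      exact_mod_cast this
    gcongr
    norm_num1
  simp only [Real.rpow_natCast] at key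
  exact_mod_cast key

theorem bplus_le (n : ℕ) (n_large : 4 < n)
    (no_prime : ∀ p : ℕ, p.Prime → n < p → 2 * n < p + 3) :
    centralBinom n ≤ (2 * n) ^ (sqrt (2 * n) + 1) * 4 ^ (2 * n / 3) := by
  have n_pos : 0 < n := (Nat.zero_le _).trans_lt n_large
  have n2_pos : 1 ≤ 2 * n := mul_pos (zero_lt_two' ℕ) n_pos
  let f x := x ^ n.centralBinom.factorization x
  have hdecomp : centralBinom n = (∏ p ∈ Finset.range (2 * n / 3 + 1), f p) * f (2 * n - 1) := by
    have hnot : (2 * n - 1) ∉ Finset.range (2 * n / 3 + 1) := by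
      rw [Finset.mem_range]; omega
    rw [mul_comm, ← Finset.prod_insert hnot]
    refine (Eq.trans ?_ n.prod_pow_factorization_centralBinom).symm
    apply Finset.prod_subset
    · intro x hx
      rw [Finset.mem_insert, Finset.mem_range] at hx
      rw [Finset.mem_range]; omega
    intro x hx h2x
    rw [Finset.mem_insert, Finset.mem_range] at h2x
    rw [Finset.mem_range] at hx
    push Not at h2x
    by_cases hp : x.Prime
    · have hxn : x ≤ n := by
        by_contra hlt
        push Not at hlt
        have := no_prime x hp hlt
        have : x = 2 * n ∨ x = 2 * n - 2 := by omega
        have h2 : 2 ∣ x := by omega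
        have := (Nat.prime_dvd_prime_iff_eq Nat.prime_two hp).1 h2
        omega
      change x ^ n.centralBinom.factorization x = 1
      rw [factorization_centralBinom_of_two_mul_self_lt_three_mul (by omega) hxn (by omega),
        Nat.pow_zero]
    · change x ^ n.centralBinom.factorization x = 1
      rw [factorization_eq_zero_of_not_prime n.centralBinom hp, Nat.pow_zero]
  let S := {p ∈ Finset.range (2 * n / 3 + 1) | Nat.Prime p}
  have : ∏ x ∈ S, f x = ∏ x ∈ Finset.range (2 * n / 3 + 1), f x := by
    refine Finset.prod_filter_of_ne fun p _ h => ?_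
    contrapose h; dsimp only [f]
    rw [factorization_eq_zero_of_not_prime n.centralBinom h, _root_.pow_zero]
  have hsmall : ∏ x ∈ S, f x ≤ (2 * n) ^ (sqrt (2 * n)) * 4 ^ (2 * n / 3) := by
    rw [← Finset.prod_filter_mul_prod_filter_not S (· ≤ sqrt (2 * n))]
    apply mul_le_mul'
    · refine (Finset.prod_le_prod' fun p _ => (?_ : f p ≤ 2 * n)).trans ?_
      · exact pow_factorization_choose_le (mul_pos two_pos n_pos)
      have : (Finset.Icc 1 (sqrt (2 * n))).card = sqrt (2 * n) := by
        rw [card_Icc, Nat.add_sub_cancel]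
      rw [Finset.prod_const]
      refine pow_right_mono₀ n2_pos ((Finset.card_le_card fun x hx => ?_).trans this.le)
      obtain ⟨h1, h2⟩ := Finset.mem_filter.1 hx
      exact Finset.mem_Icc.mpr ⟨(Finset.mem_filter.1 h1).2.one_lt.le, h2⟩
    · refine le_trans ?_ (primorial_le_four_pow (2 * n / 3))
      refine (Finset.prod_le_prod' fun p hp => (?_ : f p ≤ p)).trans ?_
      · obtain ⟨h1, h2⟩ := Finset.mem_filter.1 hp
        refine (pow_right_mono₀ (Finset.mem_filter.1 h1).2.one_lt.le ?_).trans (pow_one p).le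
        exact Nat.factorization_choose_le_one (sqrt_lt'.mp <| not_le.1 h2)
      refine Finset.prod_le_prod_of_subset_of_one_le' (Finset.filter_subset _ _) ?_
      exact fun p hp _ => (Finset.mem_filter.1 hp).2.one_lt.le
  have hlast : f (2 * n - 1) ≤ 2 * n := pow_factorization_choose_le (mul_pos two_pos n_pos)
  rw [hdecomp, ← this]
  calc _ ≤ ((2 * n) ^ (sqrt (2 * n)) * 4 ^ (2 * n / 3)) * (2 * n) := Nat.mul_le_mul hsmall hlast
    _ = _ := by ring

/-- A strengthening of Bertrand's postulate: a prime in `(n, 2n-3]` for `n ≥ 7`. -/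
theorem bplus (n : ℕ) (hn : 7 ≤ n) : ∃ p : ℕ, p.Prime ∧ n < p ∧ p + 3 ≤ 2 * n := by
  by_cases h : 512 ≤ n
  · have no_prime : 4 ^ n < n * n.centralBinom :=
      Nat.four_pow_lt_mul_centralBinom n (le_trans (by norm_num1) h)
    contrapose! no_prime
    have : n.centralBinom ≤ (2 * n) ^ (sqrt (2 * n) + 1) * 4 ^ (2 * n / 3) :=
      bplus_le n (lt_of_lt_of_le (by norm_num1) h) no_prime
    grw [this, ← mul_assoc, bplus_main_inequality h]
  · rcases lt_or_ge n 11 with h1 | h1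
    · exact ⟨11, by norm_num1, by omega, by omega⟩
    rcases lt_or_ge n 19 with h2 | h2
    · exact ⟨19, by norm_num1, by omega, by omega⟩
    rcases lt_or_ge n 31 with h3 | h3
    · exact ⟨31, by norm_num1, by omega, by omega⟩
    rcases lt_or_ge n 59 with h4 | h4
    · exact ⟨59, by norm_num1, by omega, by omega⟩
    rcases lt_or_ge n 113 with h5 | h5
    · exact ⟨113, by norm_num1, by omega, by omega⟩
    rcases lt_or_ge n 223 with h6 | h6
    · exact ⟨223, by norm_num1, by omega, by omega⟩
    rcases lt_or_ge n 443 with h7 | h7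
    · exact ⟨443, by norm_num1, by omega, by omega⟩
    exact ⟨883, by norm_num1, by omega, by omega⟩

end BertrandPlusNat

section JordanPrime
open Equiv Equiv.Perm MulAction

theorem perm_apply_inv {β : Type*} (f : Perm β) (x : β) : f (f⁻¹ x) = x :=
  f.apply_symm_apply x

theorem perm_inv_apply {β : Type*} (f : Perm β) (x : β) : f⁻¹ (f x) = x :=
  f.symm_apply_apply x

theorem sylow_conj_of_order {H : Type*} [Group H] [Finite H] {p : ℕ} (hp : p.Prime)
    (hcard : ¬ p ^ 2 ∣ Nat.card H) (g₁ g₂ : H) (h₁ : orderOf g₁ = p) (h₂ : orderOf g₂ = p) :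
    ∃ z : H, z * g₁ * z⁻¹ ∈ Subgroup.zpowers g₂ := by
  have : Fact p.Prime := ⟨hp⟩
  have hpg : ∀ g : H, orderOf g = p → IsPGroup p (Subgroup.zpowers g) := by
    intro g hg
    apply IsPGroup.of_card (n := 1)
    rw [Nat.card_zpowers, hg, pow_one]
  obtain ⟨P₁, hP₁⟩ := (hpg g₁ h₁).exists_le_sylow
  obtain ⟨P₂, hP₂⟩ := (hpg g₂ h₂).exists_le_sylow
  have hP₂' : Subgroup.zpowers g₂ = (P₂ : Subgroup H) := by
    apply Subgroup.eq_of_le_of_card_ge hP₂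
    rw [Nat.card_zpowers, h₂, Sylow.card_eq_multiplicity]
    have : (Nat.card H).factorization p ≤ 1 := by
      by_contra hlt
      apply hcard
      exact (hp.pow_dvd_iff_le_factorization Nat.card_pos.ne').2 (by omega)
    calc p ^ _ ≤ p ^ 1 := Nat.pow_le_pow_right hp.pos this
      _ = p := pow_one p
  obtain ⟨z, hz⟩ := MulAction.exists_smul_eq H P₁ P₂
  refine ⟨z, ?_⟩
  rw [hP₂', ← hz]
  rw [Sylow.coe_subgroup_smul]
  exact Subgroup.smul_mem_pointwise_smul g₁ (MulAut.conj z) _ (hP₁ (Subgroup.mem_zpowers g₁))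

variable {α : Type*} [Fintype α] [DecidableEq α]

theorem jordan_lift {G : Subgroup (Perm α)} {g : Perm α} {p : ℕ} (hp : p.Prime)
    (hg : g ∈ G) (hgc : g.IsCycle) (hgp : #g.support = p)
    (hG : IsMultiplyPretransitive G α (#(g.supportᶜ)))
    (τ : Perm α) (hτ : ∀ y ∈ g.support, τ y = y) :
    ∃ x ∈ G, (∀ y ∉ g.support, x y = τ y) ∧ x * g * x⁻¹ ∈ Subgroup.zpowers g := by
  have hτ' : ∀ y ∉ g.support, τ y ∉ g.support := by
    intro y hy hy'
    have := τ.injective (hτ _ hy')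
    rw [this] at hy'
    exact hy hy'
  let e : Fin (#(g.supportᶜ)) ↪ α :=
    (g.supportᶜ).equivFin.symm.toEmbedding.trans (Function.Embedding.subtype _)
  have he : ∀ y ∉ g.support, ∃ i, e i = y := by
    intro y hy
    refine ⟨(g.supportᶜ).equivFin ⟨y, Finset.mem_compl.2 hy⟩, ?_⟩
    simp [e]
  obtain ⟨x0, hx0⟩ := hG.exists_smul_eq e (e.trans τ.toEmbedding)
  have hx0' : ∀ y ∉ g.support, (x0 : Perm α) y = τ y := by
    intro y hy
    obtain ⟨i, rfl⟩ := he y hy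
    exact DFunLike.congr_fun hx0 i
  have hx0inv : ∀ y ∉ g.support, (x0 : Perm α)⁻¹ y ∉ g.support := by
    intro y hy hy'
    have h1 : τ⁻¹ y ∉ g.support := by
      intro h2
      have h3 := hτ _ h2
      rw [perm_apply_inv] at h3
      rw [← h3] at h2
      exact hy h2
    have h4 := hx0' _ h1
    rw [perm_apply_inv] at h4
    rw [← h4, perm_inv_apply] at hy'
    exact h1 hy'
  let K : Subgroup (Perm α) := (ofSubtype : Perm {y // y ∈ g.support} →* Perm α).range
  have hK : ∀ f : Perm α, f ∈ K ↔ ∀ y ∉ g.support, f y = y := by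
    intro f
    constructor
    · rintro ⟨f', rfl⟩ y hy
      exact ofSubtype_apply_of_not_mem f' hy
    · intro h
      have h' : ∀ y, y ∈ g.support ↔ f y ∈ g.support := by
        intro y
        constructor
        · intro hy
          by_contra hc
          have := f.injective (h _ hc)
          rw [this] at hc
          exact hc hy
        · intro hy
          by_contra hc
          rw [h _ hc] at hy
          exact hc hy
      refine ⟨f.subtypePerm (fun y => (h' y).symm), ?_⟩
      apply ofSubtype_subtypePerm
      intro y hy
      by_contra hc
      exact hy (h y hc)
  let H : Subgroup (Perm α) := G ⊓ K
  have hHcard : ¬ p ^ 2 ∣ Nat.card H := by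
    intro hd
    have h1 : Nat.card H ∣ Nat.card K := Subgroup.card_dvd_of_le inf_le_right
    have h2 : Nat.card K = p.factorial := by
      rw [← Nat.card_congr (MonoidHom.ofInjective
        (ofSubtype_injective (p := fun y => y ∈ g.support))).toEquiv, Nat.card_perm,
        Nat.card_eq_fintype_card, Fintype.card_coe, hgp]
    rw [h2] at h1
    have h3 := hd.trans h1
    obtain ⟨q, rfl⟩ : ∃ q, p = q + 1 := ⟨p - 1, by have := hp.pos; omega⟩
    rw [Nat.factorial_succ, pow_two] at h3
    have h4 := Nat.dvd_of_mul_dvd_mul_left (Nat.succ_pos q) h3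
    have := (hp.dvd_factorial).1 h4
    omega
  have hgH : g ∈ H := ⟨hg, (hK g).2 fun y hy => notMem_support.1 hy⟩
  have hcH : (x0 : Perm α) * g * (x0 : Perm α)⁻¹ ∈ H := by
    refine ⟨G.mul_mem (G.mul_mem x0.2 hg) (G.inv_mem x0.2), (hK _).2 fun y hy => ?_⟩
    rw [Perm.mul_apply, Perm.mul_apply, notMem_support.1 (hx0inv y hy), perm_apply_inv]
  have hog : orderOf g = p := by rw [hgc.orderOf, hgp]
  obtain ⟨z, hz⟩ := sylow_conj_of_order hp hHcard ⟨_, hcH⟩ ⟨g, hgH⟩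
    (by
      rw [Subgroup.orderOf_mk, ← hog]
      exact orderOf_injective (MulAut.conj (x0 : Perm α)).toMonoidHom
        (MulAut.conj (x0 : Perm α)).injective g)
    (by rw [Subgroup.orderOf_mk, hog])
  refine ⟨(z : Perm α) * x0, G.mul_mem z.2.1 x0.2, ?_, ?_⟩
  · intro y hy
    rw [Perm.mul_apply, hx0' y hy]
    exact (hK _).1 z.2.2 _ (hτ' y hy)
  · obtain ⟨i, hi⟩ := Subgroup.mem_zpowers_iff.1 hz
    refine Subgroup.mem_zpowers_iff.2 ⟨i, ?_⟩
    have := congrArg (Subtype.val) hi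
    push_cast at this
    rw [this]
    group

theorem card_ofFixing (G : Subgroup (Perm α)) (g : Perm α) :
    Nat.card (SubMulAction.ofFixingSubgroup G (g.support : Set α)ᶜ) = #g.support := by
  classical
  rw [Nat.card_eq_fintype_card, Fintype.card_subtype]
  apply congr_arg
  ext x
  simp [SubMulAction.mem_ofFixingSubgroup_iff]

theorem jordan_prime {G : Subgroup (Perm α)} (hG : IsPreprimitive G α) {g : Perm α} {p : ℕ}
    (hp : p.Prime) (hp3 : p + 3 ≤ Fintype.card α)
    (hg : g ∈ G) (hgc : g.IsCycle) (hgp : #g.support = p) :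
    alternatingGroup α ≤ G := by
  have hcc : #(g.supportᶜ) = Fintype.card α - p := by rw [Finset.card_compl, hgp]
  have hmp : IsMultiplyPreprimitive G α ((Fintype.card α - p - 1) + 2) := by
    apply hG.isMultiplyPreprimitive (s := ((g.support : Set α))ᶜ)
    · rw [← Finset.coe_compl, Set.ncard_coe_finset, hcc]; omega
    · rw [Nat.card_eq_fintype_card]; have := hp.two_le; omega
    · have := isPretransitive_of_isCycle_mem hgc hg
      apply IsPreprimitive.of_prime_card
      rw [card_ofFixing, hgp]
      exact hp
  have hmt : IsMultiplyPretransitive G α (#(g.supportᶜ)) := by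
    have := hmp.isMultiplyPretransitive
    refine isMultiplyPretransitive_of_le (n := (Fintype.card α - p - 1) + 2) ?_ ?_
    · omega
    · simp; have := hp.two_le; omega
  obtain ⟨a, ha, b, hb, c, hc, hab, hac, hbc⟩ := Finset.two_lt_card.1
    (show 2 < #(g.supportᶜ) by omega)
  rw [Finset.mem_compl] at ha hb hc
  have hsw : ∀ a b, a ∉ g.support → b ∉ g.support → ∀ y ∈ g.support, swap a b y = y := by
    intro a b ha hb y hy
    apply swap_apply_of_ne_of_ne
    · rintro rfl; exact ha hy
    · rintro rfl; exact hb hy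
  have hsw' : ∀ a b, a ∉ g.support → b ∉ g.support → ∀ y ∉ g.support, swap a b y ∉ g.support := by
    intro a b ha hb y hy hy'
    have := hsw a b ha hb _ hy'
    rw [swap_apply_self] at this
    rw [← this] at hy'
    exact hy hy'
  obtain ⟨x, hxG, hx, hxg⟩ := jordan_lift hp hg hgc hgp hmt (swap b a) (hsw b a hb ha)
  obtain ⟨y, hyG, hy, hyg⟩ := jordan_lift hp hg hgc hgp hmt (swap b c) (hsw b c hb hc)
  obtain ⟨i, hi⟩ := Subgroup.mem_zpowers_iff.1 hxg
  obtain ⟨j, hj⟩ := Subgroup.mem_zpowers_iff.1 hyg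
  have hxinv : ∀ z ∉ g.support, x⁻¹ z = swap b a z := by
    intro z hz
    rw [Perm.inv_eq_iff_eq, hx _ (hsw' b a hb ha z hz), swap_apply_self]
  have hyinv : ∀ z ∉ g.support, y⁻¹ z = swap b c z := by
    intro z hz
    rw [Perm.inv_eq_iff_eq, hy _ (hsw' b c hb hc z hz), swap_apply_self]
  set h : Perm α := x⁻¹ * y⁻¹ * x * y with hh
  have hhG : h ∈ G := G.mul_mem (G.mul_mem (G.mul_mem (G.inv_mem hxG) (G.inv_mem hyG)) hxG) hyG
  have hcomm : h * g = g * h := by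
    have h1 : (x * y) * g * (x * y)⁻¹ = g ^ (i * j) := by
      calc (x * y) * g * (x * y)⁻¹ = x * (y * g * y⁻¹) * x⁻¹ := by group
        _ = (x * g * x⁻¹) ^ j := by rw [← hj, conj_zpow]
        _ = _ := by rw [← hi, zpow_mul]
    have h2 : (y * x) * g * (y * x)⁻¹ = g ^ (i * j) := by
      calc (y * x) * g * (y * x)⁻¹ = y * (x * g * x⁻¹) * y⁻¹ := by group
        _ = (y * g * y⁻¹) ^ i := by rw [← hi, conj_zpow]
        _ = _ := by rw [← hj, mul_comm i j, zpow_mul]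
    have h3 : (x * y) * g = g ^ (i * j) * (x * y) := by rw [← h1]; group
    have h4 : g ^ (i * j) = (y * x) * g * (y * x)⁻¹ := h2.symm
    calc h * g = (y * x)⁻¹ * ((x * y) * g) := by rw [hh]; group
      _ = (y * x)⁻¹ * ((y * x) * g * (y * x)⁻¹ * (x * y)) := by rw [h3, h4]
      _ = g * h := by rw [hh]; group
  have hhoff : ∀ z ∉ g.support, h z = ((swap b a * swap b c) ^ 2) z := by
    intro z hz
    have e1 := hsw' b c hb hc z hz
    have e2 := hsw' b a hb ha _ e1
    have e3 := hsw' b c hb hc _ e2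
    rw [hh, Perm.mul_apply, Perm.mul_apply, Perm.mul_apply, hy z hz, hx _ e1, hyinv _ e2,
      hxinv _ e3, pow_two]
    rfl
  have hhon : ∃ k : ℤ, ∀ z ∈ g.support, h z = (g ^ k) z := by
    obtain ⟨s, hs, hsc⟩ := hgc
    have hhs : g (h s) ≠ h s := by
      intro hc'
      have : (g * h) s = h s := hc'
      rw [← hcomm] at this
      exact hs (h.injective this)
    obtain ⟨k, hk⟩ := hsc hhs
    refine ⟨k, fun z hz => ?_⟩
    obtain ⟨l, rfl⟩ := hsc (mem_support.1 hz)
    have hc2 : Commute h (g ^ l) := (show Commute h g from hcomm).zpow_right l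
    calc h ((g ^ l) s) = (h * g ^ l) s := rfl
      _ = (g ^ l * h) s := by rw [hc2.eq]
      _ = (g ^ l) ((g ^ k) s) := by rw [hk]; rfl
      _ = (g ^ l * g ^ k) s := rfl
      _ = (g ^ k * g ^ l) s := by rw [← zpow_add, ← zpow_add, add_comm]
      _ = _ := rfl
  obtain ⟨k, hk⟩ := hhon
  have hfin : g ^ (-k) * h = (swap b a * swap b c) ^ 2 := by
    ext z
    by_cases hz : z ∈ g.support
    · rw [Perm.mul_apply, hk z hz, ← Perm.mul_apply, ← zpow_add]
      simp [pow_two, hsw b c hb hc z hz, hsw b a hb ha z hz]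
    · have e1 := hsw' b c hb hc z hz
      have e2 := hsw' b a hb ha _ e1
      have e3 := hsw' b c hb hc _ e2
      have e4 := hsw' b a hb ha _ e3
      rw [Perm.mul_apply, hhoff z hz]
      have : ((swap b a * swap b c) ^ 2) z ∉ (g ^ (-k)).support :=
        fun h' => e4 (support_zpow_le g (-k) h')
      exact notMem_support.1 this
  have h3 : IsThreeCycle ((swap b a * swap b c) ^ 2) := by
    rw [pow_two]
    exact (isThreeCycle_swap_mul_swap_same hab.symm hbc hac).isThreeCycle_sq
  refine alternatingGroup_le_of_isPreprimitive_of_isThreeCycle_mem hG h3 ?_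
  rw [← hfin]
  exact G.mul_mem (G.zpow_mem hg _) hhG

/-- A transitive group containing an element of prime order `p`, `n/2 < p ≤ n-3`, contains `A_n`. -/
theorem alternating_le_of_dvd {G : Subgroup (Perm α)} (hG : IsPretransitive G α) {p : ℕ}
    (hp : p.Prime) (hp2 : Fintype.card α < 2 * p) (hp3 : p + 3 ≤ Fintype.card α)
    (hd : p ∣ Nat.card G) : alternatingGroup α ≤ G := by
  have : Fact p.Prime := ⟨hp⟩
  obtain ⟨⟨g, hg⟩, hog⟩ := exists_prime_orderOf_dvd_card' p hd
  rw [Subgroup.orderOf_mk] at hog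
  have hgc : g.IsCycle := isCycle_of_prime_order' (by rw [hog]; exact hp) (by rw [hog]; exact hp2)
  have hgp : #g.support = p := by rw [← hgc.orderOf, hog]
  refine jordan_prime ?_ hp hp3 hg hgc hgp
  have := isPretransitive_of_isCycle_mem hgc hg
  have hcard : Nat.card (SubMulAction.ofFixingSubgroup G (g.support : Set α)ᶜ) = p := by
    rw [card_ofFixing, hgp]
  have hpr : IsPreprimitive (fixingSubgroup G (g.support : Set α)ᶜ)
      (SubMulAction.ofFixingSubgroup G (g.support : Set α)ᶜ) := by
    apply IsPreprimitive.of_prime_card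
    rw [hcard]; exact hp
  let f : (SubMulAction.ofFixingSubgroup G (g.support : Set α)ᶜ) →ₑ[
      (Subtype.val : fixingSubgroup G (g.support : Set α)ᶜ → G)] α :=
    { toFun := Subtype.val
      map_smul' := fun _ _ => rfl }
  apply IsPreprimitive.of_card_lt (f := f)
  have : (Set.range f).ncard = p := by
    rw [← hcard]
    exact Set.ncard_range_of_injective Subtype.val_injective
  rw [this, Nat.card_eq_fintype_card]
  exact hp2

end JordanPrime

section Newton

variable {K Γ : Type*} [Field K] [LinearOrderedCommGroupWithZero Γ]

/-- weighted valuation of the `j`-th coefficient -/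
noncomputable def wt (w : Valuation K Γ) (γ : Γ) (p : ℕ) (F : K[X]) (j : ℕ) : Γ :=
  w (F.coeff j) ^ p * γ ^ j

theorem wt_X_mul_succ (w : Valuation K Γ) (γ : Γ) (p : ℕ) (F : K[X]) (j : ℕ) :
    wt w γ p (X * F) (j + 1) = γ * wt w γ p F j := by
  rw [wt, wt, coeff_X_mul, pow_succ', mul_left_comm]

theorem wt_aux (x y : Γ) (m p j : ℕ) : (x ^ m * y) ^ p * x ^ j = x ^ (m * p + j) * y ^ p := by
  rw [mul_pow, ← pow_mul, pow_add, mul_right_comm]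

theorem wt_C_mul (w : Valuation K Γ) (γ : Γ) (p : ℕ) (F : K[X]) (a : K) (j : ℕ) :
    wt w γ p (C (-a) * F) j = w a ^ p * wt w γ p F j := by
  simp only [wt, coeff_C_mul, map_mul, Valuation.map_neg, mul_pow, mul_assoc]

theorem wt_peak_add (w : Valuation K Γ) {γ : Γ} {p : ℕ} {F H : K[X]}
    {k : ℕ} (h1 : ∀ j ≠ k, wt w γ p F j < wt w γ p F k)
    (h2 : ∀ j, wt w γ p H j < wt w γ p F k) :
    ∀ j ≠ k, wt w γ p (F + H) j < wt w γ p (F + H) k := by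
  have hk : wt w γ p (F + H) k = wt w γ p F k := by
    have : w (H.coeff k) < w (F.coeff k) := by
      have h3 := lt_of_mul_lt_mul_right' (h2 k)
      exact lt_of_pow_lt_pow_left' p h3
    simp only [wt, coeff_add, w.map_add_eq_of_lt_left this]
  intro j hj
  rw [hk]
  rcases le_max_iff.1 (w.map_add (F.coeff j) (H.coeff j)) with h | h
  · refine lt_of_le_of_lt ?_ (h1 j hj)
    simp only [wt, coeff_add]
    gcongr
  · refine lt_of_le_of_lt ?_ (h2 j)
    simp only [wt, coeff_add]
    gcongr

theorem wt_peak (w : Valuation K Γ) {γ : Γ} (hγ : γ ≠ 0) {p : ℕ} (hp : p ≠ 0) (s : Multiset K)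
    (hs : ∀ a ∈ s, w a ^ p ≠ γ) :
    ∃ k, ∀ j ≠ k, wt w γ p (s.map fun a => X - C a).prod j
      < wt w γ p (s.map fun a => X - C a).prod k := by
  induction s using Multiset.induction_on with
  | empty =>
    refine ⟨0, fun j hj => ?_⟩
    simp [wt, coeff_one, hj, hp]
  | cons a s ih =>
    obtain ⟨k, hk⟩ := ih fun b hb => hs b (Multiset.mem_cons_of_mem hb)
    set F := (s.map fun a => X - C a).prod
    have hF : ((a ::ₘ s).map fun a => X - C a).prod = X * F + C (-a) * F := by
      rw [Multiset.map_cons, Multiset.prod_cons, sub_eq_add_neg, ← C_neg, add_mul]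
    rw [hF]
    have hγ' : 0 < γ := zero_lt_iff.2 hγ
    have hpos : 0 < wt w γ p F k := lt_of_le_of_lt zero_le (hk (k + 1) (by omega))
    have hle : ∀ j, wt w γ p F j ≤ wt w γ p F k := by
      intro j
      by_cases h : j = k
      · rw [h]
      · exact (hk j h).le
    have hX0 : wt w γ p (X * F) 0 = 0 := by
      simp [wt, hp]
    rcases lt_or_gt_of_ne (hs a (Multiset.mem_cons_self a s)) with h | h
    · refine ⟨k + 1, wt_peak_add w ?_ ?_⟩
      · intro j hj
        rw [wt_X_mul_succ]
        rcases j with _ | j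
        · rw [hX0]; exact mul_pos hγ' hpos
        · rw [wt_X_mul_succ]
          exact mul_lt_mul_of_pos_left (hk j (by omega)) hγ'
      · intro j
        rw [wt_X_mul_succ, wt_C_mul]
        calc w a ^ p * wt w γ p F j ≤ w a ^ p * wt w γ p F k := by gcongr; exact hle j
          _ < γ * wt w γ p F k := mul_lt_mul_of_pos_right h hpos
    · have ha : 0 < w a ^ p := hγ'.trans h
      refine ⟨k, ?_⟩
      rw [add_comm]
      refine wt_peak_add w ?_ ?_
      · intro j hj
        rw [wt_C_mul, wt_C_mul]
        exact mul_lt_mul_of_pos_left (hk j hj) ha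
      · intro j
        rw [wt_C_mul]
        rcases j with _ | j
        · rw [hX0]; exact mul_pos ha hpos
        · rw [wt_X_mul_succ]
          calc γ * wt w γ p F j ≤ γ * wt w γ p F k := by gcongr; exact hle j
            _ < w a ^ p * wt w γ p F k := mul_lt_mul_of_pos_right h hpos

end Newton

section Ramification
open NumberField IsDedekindDomain

theorem dvd_card_gal (K : Type*) [Field K] [NumberField K] [IsGalois ℚ K] {p : ℕ} (hp : p.Prime)
    (f : ℚ[X]) (hf : f.Monic) (hsp : (f.map (algebraMap ℚ K)).Splits) (c : ℕ → ℤ)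
    (hc : ∀ j, f.coeff j = c j) (M : ℕ)
    (hM : ∀ j, ∃ m, (p : ℤ) ^ m ∣ c j ∧ M ≤ m * p + j) (j₁ j₂ : ℕ) (hj : j₁ ≠ j₂)
    (h₁ : ∃ m t, c j₁ = (p : ℤ) ^ m * t ∧ ¬ (p : ℤ) ∣ t ∧ m * p + j₁ = M)
    (h₂ : ∃ m t, c j₂ = (p : ℤ) ^ m * t ∧ ¬ (p : ℤ) ∣ t ∧ m * p + j₂ = M) :
    p ∣ Nat.card (Gal(K/ℚ)) := by
  have hpz : Prime (p : ℤ) := Nat.prime_iff_prime_int.1 hp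
  have hp0 : (Ideal.span {(p : ℤ)}) ≠ ⊥ := by simpa using hp.ne_zero
  have hPp : (Ideal.span {(p : ℤ)}).IsPrime := (Ideal.span_singleton_prime hpz.ne_zero).2 hpz
  obtain ⟨⟨P, hPprime, hPover⟩⟩ :=
    (inferInstance : Nonempty ((Ideal.span {(p : ℤ)}).primesOver (𝓞 K)))
  have hmem : ∀ t : ℤ, (t : 𝓞 K) ∈ P ↔ (p : ℤ) ∣ t := by
    intro t
    rw [← Ideal.mem_span_singleton, hPover.over, Ideal.mem_comap]
    simp
  have hpne : (p : 𝓞 K) ≠ 0 := by exact_mod_cast hp.ne_zero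
  have hP0 : P ≠ ⊥ := by
    intro h
    have := (hmem p).2 dvd_rfl
    rw [h, Ideal.mem_bot] at this
    exact hpne (by exact_mod_cast this)
  let v : HeightOneSpectrum (𝓞 K) := ⟨P, hPprime, hP0⟩
  let w := v.valuation K
  have hwint : ∀ t : ℤ, w (t : K) = v.intValuation (t : 𝓞 K) := by
    intro t
    rw [← v.valuation_of_algebraMap (K := K)]
    simp [w]
  have hwle : ∀ t : ℤ, w (t : K) ≤ 1 := fun t => by rw [hwint]; exact v.intValuation_le_one _
  have hwone : ∀ t : ℤ, ¬ (p : ℤ) ∣ t → w (t : K) = 1 := by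
    intro t ht
    rw [hwint, HeightOneSpectrum.intValuation_eq_one_iff]
    exact fun h => ht ((hmem t).1 h)
  have hwp : w ((p : ℤ) : K) = WithZero.exp (-(multiplicity P (Ideal.span {(p : 𝓞 K)})) : ℤ) := by
    rw [hwint]
    have := v.intValuation_eq_exp_neg_multiplicity hpne
    simpa using this
  set γ := w ((p : ℤ) : K) with hγdef
  have hγ : γ ≠ 0 := by rw [hwp]; exact WithZero.exp_ne_zero
  have hγ1 : γ ≤ 1 := hwle _
  -- there is a root with the right valuation
  have hroot : ∃ a : K, w a ^ p = γ := by
    by_contra hcon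
    push Not at hcon
    obtain ⟨k, hk⟩ := wt_peak w hγ hp.ne_zero (f.map (algebraMap ℚ K)).roots (fun a _ => hcon a)
    have hprod : ((f.map (algebraMap ℚ K)).roots.map fun a => X - C a).prod
        = f.map (algebraMap ℚ K) := (hsp.eq_prod_roots_of_monic (hf.map _)).symm
    rw [hprod] at hk
    have hco : ∀ j, (f.map (algebraMap ℚ K)).coeff j = (c j : K) := by
      intro j
      rw [coeff_map, hc]; simp
    have hup : ∀ j, wt w γ p (f.map (algebraMap ℚ K)) j ≤ γ ^ M := by
      intro j
      obtain ⟨m, ⟨t, ht⟩, hm⟩ := hM j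
      calc wt w γ p (f.map (algebraMap ℚ K)) j = γ ^ (m * p + j) * w (t : K) ^ p := by
            rw [wt, hco, ht, Int.cast_mul, Int.cast_pow, map_mul, map_pow]
            exact wt_aux _ _ _ _ _
        _ ≤ γ ^ (m * p + j) * 1 := by
            gcongr
            exact pow_le_one' (hwle t) p
        _ = γ ^ (m * p + j) := mul_one _
        _ ≤ γ ^ M := pow_le_pow_right_of_le_one' hγ1 hm
    have heq : ∀ j, (∃ m t, c j = (p : ℤ) ^ m * t ∧ ¬ (p : ℤ) ∣ t ∧ m * p + j = M) →
        wt w γ p (f.map (algebraMap ℚ K)) j = γ ^ M := by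
      rintro j ⟨m, t, ht, hnt, hm⟩
      calc wt w γ p (f.map (algebraMap ℚ K)) j = γ ^ (m * p + j) * w (t : K) ^ p := by
            rw [wt, hco, ht, Int.cast_mul, Int.cast_pow, map_mul, map_pow]
            exact wt_aux _ _ _ _ _
        _ = γ ^ M := by rw [hwone t hnt, hm, one_pow, mul_one]
    have hkk : ∀ j, wt w γ p (f.map (algebraMap ℚ K)) j = γ ^ M → j = k := by
      intro j h
      by_contra hne
      have := hk j hne
      rw [h] at this
      exact absurd (hup k) (not_le.2 this)
    exact hj ((hkk _ (heq _ h₁)).trans (hkk _ (heq _ h₂)).symm)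
  obtain ⟨a, ha⟩ := hroot
  have ha0 : w a ≠ 0 := by
    intro h
    rw [h, zero_pow hp.ne_zero] at ha
    exact hγ ha.symm
  have hdvd : p ∣ multiplicity P (Ideal.span {(p : 𝓞 K)}) := by
    rw [hwp, ← WithZero.exp_log ha0, ← WithZero.exp_nsmul, WithZero.exp_inj] at ha
    rw [← Int.natCast_dvd_natCast, ← dvd_neg, ← ha, nsmul_eq_mul]
    exact dvd_mul_right _ _
  have hmain := Ideal.ncard_primesOver_mul_ramificationIdxIn_mul_inertiaDegIn
    (Ideal.span {(p : ℤ)}) (𝓞 K) Gal(K/ℚ)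
  rw [Ideal.ramificationIdxIn_eq_ramificationIdx (Ideal.span {(p : ℤ)}) P Gal(K/ℚ),
    Ideal.IsDedekindDomain.ramificationIdx_eq_multiplicity (Ideal.span {(p : ℤ)}) P
      (Ideal.map_ne_bot_of_ne_bot hp0), Ideal.map_span, Set.image_singleton] at hmain
  rw [← hmain]
  have hcast : (algebraMap ℤ (𝓞 K)) (p : ℤ) = (p : 𝓞 K) := by simp
  rw [hcast]
  exact Dvd.dvd.mul_left (Dvd.dvd.mul_right hdvd _) _

end Ramification

section Coeffs

/-- integer coefficients of `lcal` -/
def lcoef (n : ℕ) (u : ℤ) (j : ℕ) : ℤ :=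
  (n.choose j : ℤ) * ∏ i ∈ Finset.Icc (j + 1) n, (1 + 2 * (u + (i : ℤ)))

theorem lcal_coeff (n : ℕ) (u : ℤ) (j : ℕ) : (lcal n u).coeff j = (lcoef n u j : ℤ) := by
  rw [lcal, finsetSum_coeff]
  simp only [coeff_C_mul_X_pow]
  rw [Finset.sum_ite_eq, lcoef]
  split_ifs with h
  · push_cast; rfl
  · rw [Finset.mem_range, not_lt] at h
    rw [Nat.choose_eq_zero_of_lt (by omega)]
    simp

theorem lcal_natDegree_le (n : ℕ) (u : ℤ) : (lcal n u).natDegree ≤ n := by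
  rw [natDegree_le_iff_coeff_eq_zero]
  intro j hj
  rw [lcal_coeff, lcoef, Nat.choose_eq_zero_of_lt hj]
  simp

theorem lcal_coeff_top (n : ℕ) (u : ℤ) : (lcal n u).coeff n = 1 := by
  rw [lcal_coeff, lcoef]
  simp

theorem lcal_natDegree (n : ℕ) (u : ℤ) : (lcal n u).natDegree = n :=
  natDegree_eq_of_le_of_coeff_ne_zero (lcal_natDegree_le n u)
    (by rw [lcal_coeff_top]; exact one_ne_zero)

theorem lcal_monic (n : ℕ) (u : ℤ) : (lcal n u).Monic := by
  rw [Monic, leadingCoeff, lcal_natDegree, lcal_coeff_top]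

theorem not_dvd_choose_aux {p n j : ℕ} (hp : p.Prime) (hp3 : 3 ≤ p) (hn : n < 2 * p) (hjn : j ≤ n)
    (h : p ≤ j ∨ p ≤ n - j) : ¬ p ∣ n.choose j := by
  intro hd
  have h1 : p ∣ j.factorial * (n - j).factorial := by
    rcases h with h | h
    · exact Dvd.dvd.mul_right ((hp.dvd_factorial).2 h) _
    · exact Dvd.dvd.mul_left ((hp.dvd_factorial).2 h) _
  have h2 : p ^ 2 ∣ n.factorial := by
    rw [← Nat.choose_mul_factorial_mul_factorial hjn, mul_assoc, pow_two]
    exact mul_dvd_mul hd h1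
  have hlog : Nat.log p n < 2 := Nat.log_lt_of_lt_pow' (by norm_num) (by nlinarith)
  rw [hp.pow_dvd_factorial_iff hlog] at h2
  have : n / p < 2 := Nat.div_lt_of_lt_mul (by omega)
  simp at h2
  omega

theorem lprod_aux {p n a : ℕ} {u : ℤ} (hp : p.Prime) (hp3 : 3 < p) (hn : n < 2 * p)
    (hu : u ≤ -2) (hup : -2 * u - 3 < p) (ha : 2 * (a : ℤ) = p - 2 * u - 1) (j : ℕ) :
    ∃ t : ℤ, ∏ i ∈ Finset.Icc (j + 1) n, (1 + 2 * (u + (i : ℤ))) =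
      (p : ℤ) ^ ((if a ∈ Finset.Icc (j + 1) n then 1 else 0) +
        (if a + p ∈ Finset.Icc (j + 1) n then 1 else 0)) * t ∧ ¬ (p : ℤ) ∣ t := by
  have hpz : Prime (p : ℤ) := Nat.prime_iff_prime_int.1 hp
  let y : ℕ → ℤ := fun i => if i = a then 1 else if i = a + p then 3 else 1 + 2 * (u + (i : ℤ))
  refine ⟨∏ i ∈ Finset.Icc (j + 1) n, y i, ?_, ?_⟩
  · have : ∀ i : ℕ, 1 + 2 * (u + (i : ℤ)) =
        (p : ℤ) ^ ((if a = i then 1 else 0) + (if a + p = i then 1 else 0)) * y i := by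
      intro i
      have hpp := hp.pos
      by_cases h1 : i = a
      · subst h1
        have h2 : ¬ (i + p = i) := by omega
        simp only [y, if_true, if_neg h2]
        simp; linarith
      · have h1' : ¬ (a = i) := fun h => h1 h.symm
        by_cases h2 : i = a + p
        · subst h2
          simp only [y, if_true, if_neg h1, if_neg h1']
          push_cast; simp; linarith
        · have h2' : ¬ (a + p = i) := fun h => h2 h.symm
          simp only [y, if_neg h1, if_neg h1', if_neg h2, if_neg h2']
          simp
    rw [Finset.prod_congr rfl fun i _ => this i, Finset.prod_mul_distrib,
      Finset.prod_pow_eq_pow_sum, Finset.sum_add_distrib, Finset.sum_ite_eq, Finset.sum_ite_eq]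
  · intro hd
    obtain ⟨i, hi, hdi⟩ := (Prime.dvd_finsetProd_iff hpz _).1 hd
    rw [Finset.mem_Icc] at hi
    simp only [y] at hdi
    split_ifs at hdi with h1 h2
    · exact hpz.not_dvd_one hdi
    · have := Int.le_of_dvd (by norm_num) hdi
      omega
    · obtain ⟨s, hs⟩ := hdi
      have hpos : (0 : ℤ) < p := by exact_mod_cast hp.pos
      have hs1 : -1 < s := by
        by_contra hc
        have : (p : ℤ) * s ≤ p * (-1) := mul_le_mul_of_nonneg_left (by omega) hpos.le
        omega
      have hs2 : s < 4 := by
        by_contra hc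
        have : (p : ℤ) * 4 ≤ p * s := mul_le_mul_of_nonneg_left (by omega) hpos.le
        omega
      interval_cases s <;> omega

theorem lcal_newton (K : Type*) [Field K] [NumberField K] [IsGalois ℚ K] {p n : ℕ} {u : ℤ}
    (hp : p.Prime) (hp3 : 3 < p) (hn : n < 2 * p) (hpn : p + 3 ≤ n)
    (hu : u ≤ -2) (hup : -2 * u - 3 < p)
    (hsp : ((lcal n u).map (algebraMap ℚ K)).Splits) : p ∣ Nat.card (Gal(K/ℚ)) := by
  have hodd : p % 2 = 1 := by
    rcases hp.eq_two_or_odd with h | h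
    · omega
    · exact h
  obtain ⟨a, ha⟩ : ∃ a : ℕ, 2 * (a : ℤ) = p - 2 * u - 1 :=
    ⟨(((p : ℤ) - 2 * u - 1) / 2).toNat, by omega⟩
  have hpz : Prime (p : ℤ) := Nat.prime_iff_prime_int.1 hp
  have hap : a ≤ p := by omega
  have ha1 : 1 ≤ a := by omega
  have key := lprod_aux hp hp3 hn hu hup ha
  have hnd : ∀ j ≤ n, (p ≤ j ∨ p ≤ n - j) → ¬ (p : ℤ) ∣ (n.choose j : ℤ) := by
    intro j hj h hd
    exact not_dvd_choose_aux hp (by omega) hn hj h (by exact_mod_cast hd)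
  have hexact : ∀ j ≤ n, (p ≤ j ∨ p ≤ n - j) → ∀ e : ℕ,
      ((if a ∈ Finset.Icc (j + 1) n then 1 else 0) +
        (if a + p ∈ Finset.Icc (j + 1) n then 1 else 0)) = e →
      ∃ t, lcoef n u j = (p : ℤ) ^ e * t ∧ ¬ (p : ℤ) ∣ t := by
    intro j hj h e he
    obtain ⟨t, ht, hnt⟩ := key j
    rw [he] at ht
    refine ⟨(n.choose j : ℤ) * t, ?_, ?_⟩
    · rw [lcoef, ht]; ring
    · intro hd
      rcases hpz.dvd_or_dvd hd with h' | h'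
      · exact hnd j hj h h'
      · exact hnt h'
  have hdv : ∀ j, ∀ e : ℕ,
      ((if a ∈ Finset.Icc (j + 1) n then 1 else 0) +
        (if a + p ∈ Finset.Icc (j + 1) n then 1 else 0)) = e → (p : ℤ) ^ e ∣ lcoef n u j := by
    intro j e he
    obtain ⟨t, ht, _⟩ := key j
    rw [he] at ht
    rw [lcoef, ht]
    exact Dvd.dvd.mul_left (Dvd.intro _ rfl) _
  by_cases hcase : a + p ≤ n
  · refine dvd_card_gal K hp (lcal n u) (lcal_monic n u) hsp (lcoef n u) (lcal_coeff n u)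
      (p + a) ?_ a (a + p) (by omega) ?_ ?_
    · intro j
      rcases lt_or_ge j a with h | h
      · refine ⟨2, hdv j 2 ?_, by omega⟩
        rw [if_pos (Finset.mem_Icc.2 (by omega)), if_pos (Finset.mem_Icc.2 (by omega))]
      · rcases lt_or_ge j (a + p) with h' | h'
        · refine ⟨1, hdv j 1 ?_, by omega⟩
          rw [if_neg (fun hc => by have := Finset.mem_Icc.1 hc; omega),
            if_pos (Finset.mem_Icc.2 (by omega))]
        · exact ⟨0, by simp, by omega⟩
    · obtain ⟨t, h1, h2⟩ := hexact a (by omega) (by omega) 1 (by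
        rw [if_neg (fun hc => by have := Finset.mem_Icc.1 hc; omega),
            if_pos (Finset.mem_Icc.2 (by omega))])
      exact ⟨1, t, h1, h2, by omega⟩
    · obtain ⟨t, h1, h2⟩ := hexact (a + p) (by omega) (by omega) 0 (by
        rw [if_neg (fun hc => by have := Finset.mem_Icc.1 hc; omega),
            if_neg (fun hc => by have := Finset.mem_Icc.1 hc; omega)])
      exact ⟨0, t, h1, h2, by omega⟩
  · refine dvd_card_gal K hp (lcal n u) (lcal_monic n u) hsp (lcoef n u) (lcal_coeff n u)
      p ?_ 0 p (by omega) ?_ ?_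
    · intro j
      rcases lt_or_ge j p with h | h
      · refine ⟨1, ?_, by omega⟩
        rcases lt_or_ge j a with h' | h'
        · refine hdv j 1 ?_
          rw [if_pos (Finset.mem_Icc.2 (by omega)),
            if_neg (fun hc => by have := Finset.mem_Icc.1 hc; omega)]
        · rw [pow_one, lcoef]
          refine Dvd.dvd.mul_right ?_ _
          exact_mod_cast hp.dvd_choose h (by omega) (by omega)
      · exact ⟨0, by simp, by omega⟩
    · obtain ⟨t, h1, h2⟩ := hexact 0 (by omega) (by omega) 1 (by
        rw [if_pos (Finset.mem_Icc.2 (by omega)),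
            if_neg (fun hc => by have := Finset.mem_Icc.1 hc; omega)])
      exact ⟨1, t, h1, h2, by omega⟩
    · obtain ⟨t, h1, h2⟩ := hexact p (by omega) (by omega) 0 (by
        rw [if_neg (fun hc => by have := Finset.mem_Icc.1 hc; omega),
            if_neg (fun hc => by have := Finset.mem_Icc.1 hc; omega)])
      exact ⟨0, t, h1, h2, by omega⟩

end Coeffs



theorem lcal_newton' (K : Type*) [Field K] [alg : Algebra ℚ K] [hfd : FiniteDimensional ℚ K]
    [hg : IsGalois ℚ K] {p n : ℕ} {u : ℤ}
    (hp : p.Prime) (hp3 : 3 < p) (hn : n < 2 * p) (hpn : p + 3 ≤ n)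
    (hu : u ≤ -2) (hup : -2 * u - 3 < p)
    (hsp : ((lcal n u).map (algebraMap ℚ K)).Splits) : p ∣ Nat.card (K ≃ₐ[ℚ] K) := by
  have hcz : CharZero K := charZero_of_injective_algebraMap (algebraMap ℚ K).injective
  have hal : alg = @DivisionRing.toRatAlgebra K _ hcz := Subsingleton.elim _ _
  subst hal
  have : NumberField K := { to_charZero := hcz, to_finiteDimensional := hfd }
  exact lcal_newton K hp hp3 hn hpn hu hup hsp

theorem isGalois_splittingField {F : Type*} [Field F] (f : F[X]) (hsep : f.Separable) :
    IsGalois F f.SplittingField := IsGalois.of_separable_splitting_field hsep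

theorem gal_contains_alternating_aux {F : Type*} [Field F] (f : F[X]) (hsep : f.Separable)
    (hirr : Irreducible f) {p n : ℕ} (hdeg : f.natDegree = n) (hp : p.Prime) (hp2 : n < 2 * p)
    (hp3 : p + 3 ≤ n) (hdvd : p ∣ Nat.card f.Gal) :
    ∀ σ : Equiv.Perm (f.rootSet f.SplittingField),
      @Equiv.Perm.sign _ (Classical.decEq _) _ σ = 1 →
      σ ∈ (@Polynomial.Gal.galActionHom F _ f f.SplittingField _ _
        ⟨Polynomial.SplittingField.splits f⟩).range := by
  have : Fact ((f.map (algebraMap F f.SplittingField)).Splits) :=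
    ⟨Polynomial.SplittingField.splits f⟩
  have hcard : Fintype.card (f.rootSet f.SplittingField) = n := by
    rw [Polynomial.card_rootSet_eq_natDegree hsep (Polynomial.SplittingField.splits f), hdeg]
  have htr := Polynomial.Gal.galAction_isPretransitive f f.SplittingField hirr
  intro σ hσ
  let _ : DecidableEq (f.rootSet f.SplittingField) := Classical.decEq _
  refine alternating_le_of_dvd
    (G := (Polynomial.Gal.galActionHom f f.SplittingField).range)
    ?_ hp (by rw [hcard]; exact hp2) (by rw [hcard]; exact hp3) ?_ ?_
  · refine ⟨fun x y => ?_⟩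
    obtain ⟨g, hg⟩ := htr.exists_smul_eq x y
    exact ⟨⟨_, ⟨g, rfl⟩⟩, hg⟩
  · rw [← Nat.card_congr (MonoidHom.ofInjective
      (Polynomial.Gal.galActionHom_injective f f.SplittingField)).toEquiv]
    exact hdvd
  · exact Equiv.Perm.mem_alternatingGroup.2 hσ

/-- If `u < 0`, `v = -u ≥ 2`, `n ≥ max{14, 2v-1}`, `𝓛_n^{(u)}(x)` is irreducible over `ℚ`,
and there is a prime `p` with `2v - 3 < p < n - 2`, then the Galois group of `𝓛_n^{(u)}(x)`
contains the alternating group `A_n`: every even permutation of the roots is realised by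
some element of the Galois group. -/
theorem gal_lcal_contains_alternating (u : ℤ) (hu : u < 0) (v : ℤ) (hv : v = -u) (hv2 : 2 ≤ v)
    (n : ℕ) (hn14 : 14 ≤ n) (hn : 2 * v - 1 ≤ (n : ℤ))
    (hirr : Irreducible (lcal n u))
    (hex : ∃ p : ℕ, p.Prime ∧ 2 * v - 3 < (p : ℤ) ∧ (p : ℤ) < (n : ℤ) - 2) :
    ∀ σ : Equiv.Perm ((lcal n u).rootSet (lcal n u).SplittingField),
      @Equiv.Perm.sign _ (Classical.decEq _) _ σ = 1 →
      σ ∈ (@Polynomial.Gal.galActionHom ℚ _ (lcal n u) (lcal n u).SplittingField _ _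
        ⟨Polynomial.SplittingField.splits (lcal n u)⟩).range := by
  obtain ⟨p, hp, hp2, hp3, hpv⟩ : ∃ p : ℕ, p.Prime ∧ n < 2 * p ∧ p + 3 ≤ n ∧
      2 * v - 3 < (p : ℤ) := by
    obtain ⟨p, hp, h1, h2⟩ := hex
    by_cases h : n < 2 * p
    · exact ⟨p, hp, h, by omega, h1⟩
    · obtain ⟨q, hq, h3, h4⟩ := bplus (n / 2) (by omega)
      exact ⟨q, hq, by omega, by omega, by omega⟩
  have hsep : (lcal n u).Separable := hirr.separable
  have hdvd : p ∣ Nat.card (lcal n u).Gal :=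
    @lcal_newton' (lcal n u).SplittingField _ _ inferInstance
      (isGalois_splittingField (lcal n u) hsep) p n u hp (by omega) hp2 hp3 (by omega) (by omega)
      (Polynomial.SplittingField.splits (lcal n u))
  exact gal_contains_alternating_aux (lcal n u) hsep hirr (lcal_natDegree _ _) hp hp2 hp3 hdvd
end
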